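/- There exist constants ν₀ ∈ (0,1) and C > 0, independent of ν, k and λ, such that for every 0 < ν ≤ ν₀, every k = (k₁,k₃) ∈ ℤ² with |k₁| ≥ 1, every λ ∈ ℝ, every F ∈ L²(I), and every solution w ∈ H²(I) of the Orr–Sommerfeld problem with Navier-slip boundary conditions and right-hand side F, one has ν^{3/8}|k₁|^{5/8}( ‖w‖_{L¹} + |k|^{1/2}‖u‖_{L²} ) + ν^{3/4}|k₁|^{1/4}‖w'‖_{L²} + ν^{1/2}|k₁|^{1/2}‖w‖_{L²} ≤ C ‖F‖_{L²}. -/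

import Mathlib

open Real MeasureTheory

noncomputable section

/-- `|k| = sqrt (k₁² + k₃²)` for `k = (k₁,k₃) ∈ ℤ²`. -/
def kabs (k₁ k₃ : ℤ) : ℝ := Real.sqrt ((k₁ : ℝ) ^ 2 + (k₃ : ℝ) ^ 2)

/-- The `L²` norm on the interval `(-1,1)`. -/
def l2 (f : ℝ → ℂ) : ℝ := Real.sqrt (∫ y in (-1:ℝ)..1, ‖f y‖ ^ 2)

/-- The `L¹` norm on the interval `(-1,1)`. -/
def l1 (f : ℝ → ℂ) : ℝ := ∫ y in (-1:ℝ)..1, ‖f y‖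

/-- `‖(∂_y,|k|)f‖_{L²} = (‖f'‖² + |k|²‖f‖²)^{1/2}`; for `f = φ` this
is the `L²` norm of the velocity `u = (∂_yφ, -i|k|φ)`. -/
def hk (k₁ k₃ : ℤ) (f : ℝ → ℂ) : ℝ :=
  Real.sqrt ((∫ y in (-1:ℝ)..1, ‖deriv f y‖ ^ 2) +
    (kabs k₁ k₃) ^ 2 * ∫ y in (-1:ℝ)..1, ‖f y‖ ^ 2)

/-- The Orr–Sommerfeld problem with Navier-slip boundary conditions:
`-ν(∂_y² - |k|²)w + ik₁[(1-y²-λ)w + 2φ] = F` on `[-1,1]`, where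
`(∂_y² - |k|²)φ = w`, `φ(±1) = φ''(±1) = 0`. -/
def OSslip (ν : ℝ) (k₁ k₃ : ℤ) (lam : ℂ) (w φ F : ℝ → ℂ) : Prop :=
  ContDiff ℝ 2 w ∧ ContDiff ℝ 2 φ ∧
  (∀ y ∈ Set.Icc (-1:ℝ) 1,
    -(ν : ℂ) * (deriv (deriv w) y - ((kabs k₁ k₃ : ℝ) : ℂ) ^ 2 * w y) +
      Complex.I * (k₁ : ℂ) * ((1 - (y : ℂ) ^ 2 - lam) * w y + 2 * φ y) = F y) ∧
  (∀ y ∈ Set.Icc (-1:ℝ) 1,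
    deriv (deriv φ) y - ((kabs k₁ k₃ : ℝ) : ℂ) ^ 2 * φ y = w y) ∧
  φ (-1) = 0 ∧ φ 1 = 0 ∧ deriv (deriv φ) (-1) = 0 ∧ deriv (deriv φ) 1 = 0

/-!
Divide the equation by `|k₁|` and set `σ = (ν / |k₁|) ^ (1 / 4)`, `a = 1 - λ`. Testing against `w`
bounds the dissipation, and the part of the test that is out of phase bounds the Rayleigh form
`∫ (a - y²) |w|² - 2 (|φ'|² + K² |φ|²)`. On an interval free of critical points, the substitution
`φ = (a - y²) ψ` turns that form into a sum of squares, so it controls the sheared norm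
`∫ |a - y²| |w|²`; boundary layers recover the full norm from the sheared one and the dissipation.

If `a ≲ σ²` or `a > 1`, this coercivity holds up to errors that the viscosity absorbs. Otherwise
write `√a = σ r²` with `r` large and take layers of width `σ / r` around the critical points `±√a`.
Averaging the equation over a layer bounds `φ` at a critical point, and subtracting from `φ` a
solution of the homogeneous Helmholtz equation reduces each subinterval to Dirichlet conditions.
The integral of `1 / |a - y²|` outside the layers loses only `log r`, which a negative power of `r`
beats.
-/

section IntervalIntegrals

variable {E : Type*} [NormedAddCommGroup E] {α β γ δ y z : ℝ} {f g ρ : ℝ → ℝ}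

lemma integral_mono_of_continuousOn (h : α ≤ β) (hf : ContinuousOn f (Set.Icc α β))
    (hg : ContinuousOn g (Set.Icc α β)) (hfg : ∀ y ∈ Set.Icc α β, f y ≤ g y) :
    ∫ y in α..β, f y ≤ ∫ y in α..β, g y :=
  intervalIntegral.integral_mono_on h (hf.intervalIntegrable_of_Icc h)
    (hg.intervalIntegrable_of_Icc h) hfg

lemma integral_le_integral_of_subinterval (h₁ : γ ≤ α) (h₂ : α ≤ β) (h₃ : β ≤ δ)
    (hg : ContinuousOn g (Set.Icc γ δ)) (hg₀ : ∀ y ∈ Set.Icc γ δ, 0 ≤ g y) :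
    ∫ y in α..β, g y ≤ ∫ y in γ..δ, g y :=
  intervalIntegral.integral_mono_interval h₁ h₂ h₃
    (ae_restrict_of_forall_mem measurableSet_Ioc fun y hy => hg₀ y (Set.Ioc_subset_Icc_self hy))
    (hg.intervalIntegrable_of_Icc (h₁.trans (h₂.trans h₃)))

lemma integral_split_of_continuousOn (h₁ : α ≤ β) (h₂ : β ≤ γ)
    (hg : ContinuousOn g (Set.Icc α γ)) :
    ∫ y in α..γ, g y = (∫ y in α..β, g y) + ∫ y in β..γ, g y :=
  (intervalIntegral.integral_add_adjacent_intervals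
    ((hg.mono (Set.Icc_subset_Icc le_rfl h₂)).intervalIntegrable_of_Icc h₁)
    ((hg.mono (Set.Icc_subset_Icc h₁ le_rfl)).intervalIntegrable_of_Icc h₂)).symm

lemma exists_mul_sub_le_integral (h : α < β) (hg : ContinuousOn g (Set.Icc α β)) :
    ∃ c ∈ Set.Icc α β, g c * (β - α) ≤ ∫ y in α..β, g y := by
  obtain ⟨c, hc, hmin⟩ := isCompact_Icc.exists_isMinOn (Set.nonempty_Icc.2 h.le) hg
  refine ⟨c, hc, ?_⟩
  calc g c * (β - α) = ∫ _ in α..β, g c := by simp [mul_comm]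
    _ ≤ ∫ y in α..β, g y :=
      integral_mono_of_continuousOn h.le continuousOn_const hg fun y hy => hmin hy

lemma sq_integral_mul_le (h : α ≤ β) (hf : ContinuousOn f (Set.Icc α β))
    (hg : ContinuousOn g (Set.Icc α β)) :
    (∫ y in α..β, f y * g y) ^ 2 ≤ (∫ y in α..β, f y ^ 2) * ∫ y in α..β, g y ^ 2 := by
  have hff : IntervalIntegrable (fun y => f y ^ 2) volume α β :=
    (hf.pow 2).intervalIntegrable_of_Icc h
  have hgg : IntervalIntegrable (fun y => g y ^ 2) volume α β :=
    (hg.pow 2).intervalIntegrable_of_Icc h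
  have hfg : IntervalIntegrable (fun y => f y * g y) volume α β :=
    (hf.mul hg).intervalIntegrable_of_Icc h
  have expand (t : ℝ) : ∫ y in α..β, (t * f y + g y) ^ 2 =
      (∫ y in α..β, f y ^ 2) * (t * t) + (2 * ∫ y in α..β, f y * g y) * t
        + ∫ y in α..β, g y ^ 2 := by
    have h_sq : ∀ y, (t * f y + g y) ^ 2 =
        (t * t) * f y ^ 2 + (2 * t) * (f y * g y) + g y ^ 2 := fun y => by ring
    simp only [h_sq]
    rw [intervalIntegral.integral_add ((hff.const_mul _).add (hfg.const_mul _)) hgg,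
      intervalIntegral.integral_add (hff.const_mul _) (hfg.const_mul _),
      intervalIntegral.integral_const_mul, intervalIntegral.integral_const_mul]
    ring
  have h_discrim := discrim_le_zero fun t : ℝ =>
    (intervalIntegral.integral_nonneg h fun y _ => sq_nonneg (t * f y + g y)).trans_eq (expand t)
  unfold discrim at h_discrim
  linarith

lemma sq_integral_le_integral_inv_mul (h : α ≤ β) (hρ : ContinuousOn ρ (Set.Icc α β))
    (hg : ContinuousOn g (Set.Icc α β)) (hρ₀ : ∀ y ∈ Set.Icc α β, 0 < ρ y) :
    (∫ y in α..β, g y) ^ 2 ≤ (∫ y in α..β, (ρ y)⁻¹) * ∫ y in α..β, ρ y * g y ^ 2 := by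
  have hs : ∀ y ∈ Set.Icc α β, √(ρ y) ≠ 0 := fun y hy => (Real.sqrt_pos.2 (hρ₀ y hy)).ne'
  have congr_Icc {u v : ℝ → ℝ} (huv : ∀ y ∈ Set.Icc α β, u y = v y) :
      ∫ y in α..β, u y = ∫ y in α..β, v y :=
    intervalIntegral.integral_congr fun y hy => huv y (Set.uIcc_of_le h ▸ hy)
  have h_prod : ∫ y in α..β, (√(ρ y))⁻¹ * (√(ρ y) * g y) = ∫ y in α..β, g y :=
    congr_Icc fun y hy => inv_mul_cancel_left₀ (hs y hy) (g y)
  have h_inv : ∫ y in α..β, (√(ρ y))⁻¹ ^ 2 = ∫ y in α..β, (ρ y)⁻¹ :=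
    congr_Icc fun y hy => by rw [inv_pow, Real.sq_sqrt (hρ₀ y hy).le]
  have h_mul : ∫ y in α..β, (√(ρ y) * g y) ^ 2 = ∫ y in α..β, ρ y * g y ^ 2 :=
    congr_Icc fun y hy => by rw [mul_pow, Real.sq_sqrt (hρ₀ y hy).le]
  rw [← h_prod, ← h_inv, ← h_mul]
  exact sq_integral_mul_le h (hρ.sqrt.inv₀ hs) (hρ.sqrt.mul hg)

lemma sq_integral_le_mul_integral_sq (h : α ≤ β) (hg : ContinuousOn g (Set.Icc α β)) :
    (∫ y in α..β, g y) ^ 2 ≤ (β - α) * ∫ y in α..β, g y ^ 2 := by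
  simpa using sq_integral_mul_le h (f := fun _ => 1) continuousOn_const hg

lemma norm_integral_le_integral_norm_of_mem_Icc [NormedSpace ℝ E] {v : ℝ → E}
    (hv : ContinuousOn v (Set.Icc γ δ)) (hy : y ∈ Set.Icc γ δ) (hz : z ∈ Set.Icc γ δ) :
    ‖∫ t in z..y, v t‖ ≤ ∫ t in γ..δ, ‖v t‖ := by
  have h : γ ≤ δ := hy.1.trans hy.2
  calc ‖∫ t in z..y, v t‖ ≤ |∫ t in z..y, ‖v t‖| :=
        intervalIntegral.norm_integral_le_abs_integral_norm
    _ ≤ |∫ t in γ..δ, ‖v t‖| := by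
      refine intervalIntegral.abs_integral_mono_interval ?_ (.of_forall fun _ => norm_nonneg _)
        (hv.norm.intervalIntegrable_of_Icc h)
      rw [Set.uIoc_of_le h]
      exact Set.Ioc_subset_Ioc (le_min hz.1 hy.1) (max_le hz.2 hy.2)
    _ = ∫ t in γ..δ, ‖v t‖ :=
      abs_of_nonneg (intervalIntegral.integral_nonneg h fun _ _ => norm_nonneg _)

lemma sq_norm_sub_le_mul_integral [NormedSpace ℝ E] [CompleteSpace E] {w : ℝ → E}
    (hw : ContDiff ℝ 1 w) (hy : y ∈ Set.Icc γ δ) (hz : z ∈ Set.Icc γ δ) :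
    ‖w y - w z‖ ^ 2 ≤ (δ - γ) * ∫ t in γ..δ, ‖deriv w t‖ ^ 2 := by
  have hw' : Continuous (deriv w) := hw.continuous_deriv_one
  have h_ftc : w y - w z = ∫ t in z..y, deriv w t :=
    (intervalIntegral.integral_deriv_eq_sub
      (fun t _ => hw.differentiable_one t) (hw'.intervalIntegrable _ _)).symm
  calc ‖w y - w z‖ ^ 2 ≤ (∫ t in γ..δ, ‖deriv w t‖) ^ 2 := by
        rw [h_ftc]
        gcongr
        exact norm_integral_le_integral_norm_of_mem_Icc hw'.continuousOn hy hz
    _ ≤ _ := sq_integral_le_mul_integral_sq (hy.1.trans hy.2) hw'.norm.continuousOn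

lemma sq_norm_le_add_integral [InnerProductSpace ℝ E] {w : ℝ → E} (hw : ContDiff ℝ 1 w)
    (hy : y ∈ Set.Icc γ δ) (hz : z ∈ Set.Icc γ δ) :
    ‖w y‖ ^ 2 ≤ ‖w z‖ ^ 2 + 2 * ∫ t in γ..δ, ‖w t‖ * ‖deriv w t‖ := by
  have hwc : Continuous w := hw.continuous
  have hcont : Continuous fun t => 2 * inner ℝ (w t) (deriv w t) := by fun_prop
  have h_ftc : ∫ t in z..y, 2 * inner ℝ (w t) (deriv w t) = ‖w y‖ ^ 2 - ‖w z‖ ^ 2 :=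
    intervalIntegral.integral_eq_sub_of_hasDerivAt
      (fun t _ => (hw.differentiable_one t).hasDerivAt.norm_sq) (hcont.intervalIntegrable _ _)
  have h_bound : ‖w y‖ ^ 2 - ‖w z‖ ^ 2 ≤ ∫ t in γ..δ, 2 * (‖w t‖ * ‖deriv w t‖) := by
    rw [← h_ftc]
    refine (le_abs_self _).trans
      ((norm_integral_le_integral_norm_of_mem_Icc hcont.continuousOn hy hz).trans ?_)
    refine integral_mono_of_continuousOn (hy.1.trans hy.2) (by fun_prop) (by fun_prop)
      fun t _ => ?_
    rw [norm_mul, Real.norm_two]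
    gcongr
    exact abs_real_inner_le_norm _ _
  rw [intervalIntegral.integral_const_mul] at h_bound
  linarith

end IntervalIntegrals

section Helmholtz

variable {E : Type*} [NormedAddCommGroup E] {K α β m : ℝ} {p φ w : ℝ → E}

section SinhInterpolant

variable [NormedSpace ℝ E]

/-- The solution `l` of `l'' = K² l` with boundary values `l α = A` and `l β = B`. -/
def sinhInterp (K α β : ℝ) (A B : E) (y : ℝ) : E :=
  (sinh (K * (β - y)) / sinh (K * (β - α))) • A + (sinh (K * (y - α)) / sinh (K * (β - α))) • B

lemma contDiff_sinhInterp (K α β : ℝ) (A B : E) : ContDiff ℝ 2 (sinhInterp K α β A B) := by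
  unfold sinhInterp
  fun_prop

lemma deriv_deriv_sinhInterp (K α β : ℝ) (A B : E) (y : ℝ) :
    deriv (deriv (sinhInterp K α β A B)) y = K ^ 2 • sinhInterp K α β A B y := by
  have h_left (y : ℝ) : HasDerivAt (fun y => K * (β - y)) (-K) y := by
    simpa using ((hasDerivAt_id y).const_sub β).const_mul K
  have h_right (y : ℝ) : HasDerivAt (fun y => K * (y - α)) K y := by
    simpa using ((hasDerivAt_id y).sub_const α).const_mul K
  have h_deriv : deriv (sinhInterp K α β A B) = fun y =>
      (cosh (K * (β - y)) * -K / sinh (K * (β - α))) • A +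
        (cosh (K * (y - α)) * K / sinh (K * (β - α))) • B :=
    funext fun y => (((h_left y).sinh.div_const _).smul_const A |>.add
      (((h_right y).sinh.div_const _).smul_const B)).deriv
  rw [h_deriv]
  refine ((((h_left y).cosh.mul_const (-K)).div_const _).smul_const A |>.add
    ((((h_right y).cosh.mul_const K).div_const _).smul_const B)).deriv.trans ?_
  rw [sinhInterp]
  module

lemma sinh_ne_zero_of_lt (hK : 0 < K) (h : α < β) : sinh (K * (β - α)) ≠ 0 :=
  (sinh_pos_iff.2 (mul_pos hK (sub_pos.2 h))).ne'

lemma sinhInterp_left (hK : 0 < K) (h : α < β) (A B : E) : sinhInterp K α β A B α = A := by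
  simp [sinhInterp, sinh_ne_zero_of_lt hK h]

lemma sinhInterp_right (hK : 0 < K) (h : α < β) (A B : E) : sinhInterp K α β A B β = B := by
  simp [sinhInterp, sinh_ne_zero_of_lt hK h]

lemma sinh_add_sinh_le_sinh_add {s t : ℝ} (hs : 0 ≤ s) (ht : 0 ≤ t) :
    sinh s + sinh t ≤ sinh (s + t) := by
  rw [sinh_add]
  exact add_le_add (le_mul_of_one_le_right (sinh_nonneg_iff.2 hs) (one_le_cosh t))
    (le_mul_of_one_le_left (sinh_nonneg_iff.2 ht) (one_le_cosh s))

lemma norm_sinhInterp_le (hK : 0 < K) (h : α < β) {A B : E} (hA : ‖A‖ ≤ m) (hB : ‖B‖ ≤ m)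
    {y : ℝ} (hy : y ∈ Set.Icc α β) : ‖sinhInterp K α β A B y‖ ≤ m := by
  have hD : 0 < sinh (K * (β - α)) := sinh_pos_iff.2 (mul_pos hK (sub_pos.2 h))
  have hs : 0 ≤ K * (β - y) := mul_nonneg hK.le (sub_nonneg.2 hy.2)
  have ht : 0 ≤ K * (y - α) := mul_nonneg hK.le (sub_nonneg.2 hy.1)
  have h_sum : sinh (K * (β - y)) / sinh (K * (β - α)) + sinh (K * (y - α)) / sinh (K * (β - α))
      ≤ 1 := by
    rw [← add_div, div_le_one hD]
    exact (sinh_add_sinh_le_sinh_add hs ht).trans_eq (by ring_nf)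
  calc ‖sinhInterp K α β A B y‖
      ≤ sinh (K * (β - y)) / sinh (K * (β - α)) * ‖A‖ +
          sinh (K * (y - α)) / sinh (K * (β - α)) * ‖B‖ := by
        refine (norm_add_le _ _).trans_eq ?_
        rw [norm_smul_of_nonneg (div_nonneg (sinh_nonneg_iff.2 hs) hD.le),
          norm_smul_of_nonneg (div_nonneg (sinh_nonneg_iff.2 ht) hD.le)]
    _ ≤ sinh (K * (β - y)) / sinh (K * (β - α)) * m +
          sinh (K * (y - α)) / sinh (K * (β - α)) * m := by
        have := sinh_nonneg_iff.2 hs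
        have := sinh_nonneg_iff.2 ht
        gcongr
    _ ≤ m := by
        rw [← add_mul]
        exact mul_le_of_le_one_left ((norm_nonneg A).trans hA) h_sum

end SinhInterpolant

/-- `p` solves the Helmholtz equation `p'' - K² p = w` on `[α, β]`; for convenience `p` is taken
to be `C²` on the whole line. -/
structure HelmholtzOn [NormedSpace ℝ E] (K α β : ℝ) (p w : ℝ → E) : Prop where
  contDiff : ContDiff ℝ 2 p
  eqn : ∀ y ∈ Set.Icc α β, deriv (deriv p) y - K ^ 2 • p y = w y

/-- `p` solves the Helmholtz equation on `[α, β]` with homogeneous Dirichlet conditions. -/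
structure DirichletHelmholtzOn [NormedSpace ℝ E] (K α β : ℝ) (p w : ℝ → E) : Prop
    extends HelmholtzOn K α β p w where
  left : p α = 0
  right : p β = 0

/-- The energy `∫ ‖p'‖² + K² ‖p‖²` of the Helmholtz operator on `[α, β]`. -/
def helmholtzEnergy [NormedSpace ℝ E] (K α β : ℝ) (p : ℝ → E) : ℝ :=
  ∫ y in α..β, (‖deriv p y‖ ^ 2 + K ^ 2 * ‖p y‖ ^ 2)

section NormedSpace

variable [NormedSpace ℝ E]

lemma helmholtzEnergy_nonneg (h : α ≤ β) : 0 ≤ helmholtzEnergy K α β p :=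
  intervalIntegral.integral_nonneg h fun _ _ => by positivity

namespace HelmholtzOn

lemma continuous (hp : HelmholtzOn K α β p w) : Continuous p := hp.contDiff.continuous

lemma contDiff_deriv (hp : HelmholtzOn K α β p w) : ContDiff ℝ 1 (deriv p) := hp.contDiff.deriv'

lemma continuous_deriv (hp : HelmholtzOn K α β p w) : Continuous (deriv p) :=
  hp.contDiff_deriv.continuous

lemma hasDerivAt (hp : HelmholtzOn K α β p w) (y : ℝ) : HasDerivAt p (deriv p y) y :=
  (hp.contDiff.differentiable two_ne_zero y).hasDerivAt

lemma hasDerivAt_deriv (hp : HelmholtzOn K α β p w) (y : ℝ) :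
    HasDerivAt (deriv p) (deriv (deriv p) y) y :=
  (hp.contDiff_deriv.differentiable_one y).hasDerivAt

lemma continuous_deriv_deriv (hp : HelmholtzOn K α β p w) : Continuous (deriv (deriv p)) :=
  hp.contDiff_deriv.continuous_deriv_one

lemma continuousOn_rhs (hp : HelmholtzOn K α β p w) : ContinuousOn w (Set.Icc α β) :=
  (hp.continuous_deriv_deriv.sub (hp.continuous.const_smul (K ^ 2))).continuousOn.congr
    fun y hy => (hp.eqn y hy).symm

lemma mono (hp : HelmholtzOn K α β p w) {γ δ : ℝ} (h : Set.Icc γ δ ⊆ Set.Icc α β) :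
    HelmholtzOn K γ δ p w :=
  ⟨hp.contDiff, fun y hy => hp.eqn y (h hy)⟩

lemma exists_dirichlet (hφ : HelmholtzOn K α β φ w) (hK : 0 < K) (h : α < β) (hα : ‖φ α‖ ≤ m)
    (hβ : ‖φ β‖ ≤ m) :
    ∃ p, DirichletHelmholtzOn K α β p w ∧ ∀ y ∈ Set.Icc α β, ‖φ y - p y‖ ≤ m := by
  set l := sinhInterp K α β (φ α) (φ β)
  have hl : ContDiff ℝ 2 l := contDiff_sinhInterp K α β _ _
  have hl' : ContDiff ℝ 1 (deriv l) := hl.deriv'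
  refine ⟨fun y => φ y - l y, ⟨⟨hφ.contDiff.sub hl, fun y hy => ?_⟩, ?_, ?_⟩, fun y hy => ?_⟩
  · have h_deriv : deriv (fun y => φ y - l y) = fun y => deriv φ y - deriv l y :=
      funext fun y => deriv_fun_sub (hφ.hasDerivAt y).differentiableAt
        (hl.differentiable two_ne_zero y)
    rw [h_deriv, deriv_fun_sub (hφ.hasDerivAt_deriv y).differentiableAt
      (hl'.differentiable_one y), deriv_deriv_sinhInterp, ← hφ.eqn y hy]
    module
  · exact sub_eq_zero.2 (sinhInterp_left hK h _ _).symm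
  · exact sub_eq_zero.2 (sinhInterp_right hK h _ _).symm
  · simpa using norm_sinhInterp_le hK h hα hβ hy

end HelmholtzOn

end NormedSpace

namespace DirichletHelmholtzOn

variable [InnerProductSpace ℝ E]

lemma integral_inner_eq_neg_energy (hp : DirichletHelmholtzOn K α β p w) (h : α ≤ β) :
    ∫ y in α..β, inner ℝ (p y) (w y) = -helmholtzEnergy K α β p := by
  have hp₀ := hp.continuous
  have hp₁ := hp.continuous_deriv
  have hp₂ := hp.continuous_deriv_deriv
  have hw := hp.continuousOn_rhs
  have h_parts : ∫ y in α..β, (inner ℝ (p y) (deriv (deriv p) y) + inner ℝ (deriv p y) (deriv p y))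
      = 0 := by
    rw [intervalIntegral.integral_eq_sub_of_hasDerivAt
      (fun y _ => (hp.hasDerivAt y).inner ℝ (hp.hasDerivAt_deriv y))
      ((by fun_prop : Continuous _).intervalIntegrable _ _), hp.left, hp.right]
    simp
  rw [← sub_eq_zero, sub_neg_eq_add, helmholtzEnergy, ← intervalIntegral.integral_add
    ((hp₀.continuousOn.inner hw).intervalIntegrable_of_Icc h)
    ((by fun_prop : Continuous _).intervalIntegrable _ _), ← h_parts]
  refine intervalIntegral.integral_congr fun y hy => ?_
  rw [Set.uIcc_of_le h] at hy
  simp only [← hp.eqn y hy, inner_sub_right, inner_smul_right, real_inner_self_eq_norm_sq]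
  ring

lemma abs_integral_inner_add_energy_le (hp : DirichletHelmholtzOn K α β p w) (h : α ≤ β)
    (hφ : ContinuousOn φ (Set.Icc α β)) (hm : ∀ y ∈ Set.Icc α β, ‖φ y - p y‖ ≤ m) :
    |(∫ y in α..β, inner ℝ (φ y) (w y)) + helmholtzEnergy K α β p| ≤
      m * ∫ y in α..β, ‖w y‖ := by
  have hp₀ := hp.continuous.continuousOn (s := Set.Icc α β)
  have hw := hp.continuousOn_rhs
  rw [← neg_neg (helmholtzEnergy K α β p), ← hp.integral_inner_eq_neg_energy h, ← sub_eq_add_neg,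
    ← intervalIntegral.integral_sub ((hφ.inner hw).intervalIntegrable_of_Icc h)
      ((hp₀.inner hw).intervalIntegrable_of_Icc h), ← intervalIntegral.integral_const_mul]
  refine (intervalIntegral.abs_integral_le_integral_abs h).trans
    (integral_mono_of_continuousOn h (by fun_prop) (by fun_prop) fun y hy => ?_)
  rw [← inner_sub_left]
  exact (abs_real_inner_le_norm _ _).trans (mul_le_mul_of_nonneg_right (hm y hy) (norm_nonneg _))

end DirichletHelmholtzOn

end Helmholtz

section Coercivity

variable {E : Type*} [NormedAddCommGroup E] {K a c α β : ℝ} {p w : ℝ → E}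

/-- The quadratic form `∫ (a - y²) ‖w‖²` of multiplication by the Poiseuille profile, shifted by
the spectral parameter: `a = 1 - λ`. -/
def shearForm (a α β : ℝ) (w : ℝ → E) : ℝ :=
  ∫ y in α..β, (a - y ^ 2) * ‖w y‖ ^ 2

lemma shearForm_nonneg (h : α ≤ β) (ha : ∀ y ∈ Set.Icc α β, y ^ 2 < a) :
    0 ≤ shearForm a α β w :=
  intervalIntegral.integral_nonneg h fun y hy =>
    mul_nonneg (sub_nonneg.2 (ha y hy).le) (sq_nonneg _)

section NormedSpace

variable [NormedSpace ℝ E]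

/-- The form `∫ (a - y²) ‖w‖² - 2 ∫ (‖p'‖² + K² ‖p‖²)` of the Rayleigh operator
`w ↦ (a - y²) w + 2 p`, where `p'' - K² p = w` with Dirichlet conditions. -/
def rayleighForm (a K α β : ℝ) (w p : ℝ → E) : ℝ :=
  shearForm a α β w - 2 * helmholtzEnergy K α β p

/-- The quotient `ψ = p / (a - y²)`, in which the Rayleigh form becomes a sum of squares. -/
def shearQuotient (a : ℝ) (p : ℝ → E) (y : ℝ) : E := (a - y ^ 2)⁻¹ • p y

lemma smul_shearQuotient {y : ℝ} (hy : y ^ 2 < a) : (a - y ^ 2) • shearQuotient a p y = p y :=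
  smul_inv_smul₀ (sub_pos.2 hy).ne' _

lemma continuousOn_inv_shear (ha : ∀ y ∈ Set.Icc α β, y ^ 2 < a) :
    ContinuousOn (fun y : ℝ => (a - y ^ 2)⁻¹) (Set.Icc α β) :=
  ContinuousOn.inv₀ (by fun_prop) fun y hy => (sub_pos.2 (ha y hy)).ne'

lemma continuousOn_shearQuotient (ha : ∀ y ∈ Set.Icc α β, y ^ 2 < a) (hp : Continuous p) :
    ContinuousOn (shearQuotient a p) (Set.Icc α β) :=
  (continuousOn_inv_shear ha).smul hp.continuousOn

lemma hasDerivAt_shearQuotient {y : ℝ} (hy : y ^ 2 < a) (hp : ContDiff ℝ 1 p) :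
    HasDerivAt (shearQuotient a p)
      ((a - y ^ 2)⁻¹ • (deriv p y + (2 * y) • shearQuotient a p y)) y := by
  have h_inv : HasDerivAt (fun y : ℝ => (a - y ^ 2)⁻¹) (2 * y / (a - y ^ 2) ^ 2) y := by
    simpa using ((hasDerivAt_pow 2 y).const_sub a).fun_inv (sub_pos.2 hy).ne'
  refine (h_inv.smul (hp.differentiable_one y).hasDerivAt).congr_deriv ?_
  rw [shearQuotient, div_eq_mul_inv, ← inv_pow]
  module

lemma continuousOn_deriv_shearQuotient (ha : ∀ y ∈ Set.Icc α β, y ^ 2 < a)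
    (hp : ContDiff ℝ 1 p) : ContinuousOn (deriv (shearQuotient a p)) (Set.Icc α β) := by
  have hψ := continuousOn_shearQuotient ha hp.continuous
  have hV := continuousOn_inv_shear ha
  have hp' := hp.continuous_deriv_one.continuousOn (s := Set.Icc α β)
  refine ContinuousOn.congr (f := fun y =>
    (a - y ^ 2)⁻¹ • (deriv p y + (2 * y) • shearQuotient a p y)) (by fun_prop)
    fun y hy => (hasDerivAt_shearQuotient (ha y hy) hp).deriv

lemma deriv_eq_shearQuotient {y : ℝ} (hy : y ^ 2 < a) (hp : ContDiff ℝ 1 p) :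
    deriv p y = (a - y ^ 2) • deriv (shearQuotient a p) y - (2 * y) • shearQuotient a p y := by
  rw [(hasDerivAt_shearQuotient hy hp).deriv, smul_inv_smul₀ (sub_pos.2 hy).ne',
    add_sub_cancel_right]

end NormedSpace

variable [InnerProductSpace ℝ E]

lemma integral_deriv_shearQuotient_eq_zero (h : α ≤ β) (ha : ∀ y ∈ Set.Icc α β, y ^ 2 < a)
    (hp : ContDiff ℝ 1 p) (hα : p α = 0) (hβ : p β = 0) :
    ∫ y in α..β, ((a - 3 * y ^ 2) * ‖shearQuotient a p y‖ ^ 2 + y * (a - y ^ 2) *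
      (2 * inner ℝ (shearQuotient a p y) (deriv (shearQuotient a p) y))) = 0 := by
  have hψ := continuousOn_shearQuotient ha hp.continuous
  have hψ' := continuousOn_deriv_shearQuotient ha hp
  have h_weight (y : ℝ) : HasDerivAt (fun y : ℝ => y * (a - y ^ 2)) (a - 3 * y ^ 2) y :=
    ((hasDerivAt_id y).mul ((hasDerivAt_pow 2 y).const_sub a)).congr_deriv (by simp; ring)
  rw [intervalIntegral.integral_eq_sub_of_hasDerivAt (f := fun y =>
    y * (a - y ^ 2) * ‖shearQuotient a p y‖ ^ 2)]
  · simp [shearQuotient, hα, hβ]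
  · intro y hy
    rw [Set.uIcc_of_le h] at hy
    exact (h_weight y).mul
      (hasDerivAt_shearQuotient (ha y hy) hp).differentiableAt.hasDerivAt.norm_sq
  · exact ContinuousOn.intervalIntegrable_of_Icc h (by fun_prop)

lemma shear_mul_sq_norm_add_shearQuotient {y : ℝ} (K : ℝ) (hy : y ^ 2 < a)
    (hp : ContDiff ℝ 1 p) (v : E) :
    (a - y ^ 2) * ‖v + (2 : ℝ) • shearQuotient a p y‖ ^ 2 =
      (a - y ^ 2) * ‖v‖ ^ 2 + 4 * inner ℝ (p y) v
        + 2 * (‖deriv p y‖ ^ 2 + K ^ 2 * ‖p y‖ ^ 2)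
        - 2 * ((a - y ^ 2) ^ 2 * ‖deriv (shearQuotient a p) y‖ ^ 2) - (2 * K ^ 2) * ‖p y‖ ^ 2
        + 4 * ((a - 3 * y ^ 2) * ‖shearQuotient a p y‖ ^ 2 + y * (a - y ^ 2) *
          (2 * inner ℝ (shearQuotient a p y) (deriv (shearQuotient a p) y))) := by
  set ψ := shearQuotient a p
  have h_inner : inner ℝ (p y) v = (a - y ^ 2) * inner ℝ v (ψ y) := by
    rw [← smul_shearQuotient (p := p) hy, real_inner_smul_left, real_inner_comm]
  have h_norm_deriv : ‖deriv p y‖ ^ 2 = (a - y ^ 2) ^ 2 * ‖deriv ψ y‖ ^ 2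
      - 4 * y * (a - y ^ 2) * inner ℝ (ψ y) (deriv ψ y) + 4 * y ^ 2 * ‖ψ y‖ ^ 2 := by
    rw [deriv_eq_shearQuotient hy hp, norm_sub_sq_real, norm_smul, norm_smul,
      real_inner_smul_left, real_inner_smul_right, mul_pow, mul_pow, norm_eq_abs, norm_eq_abs,
      sq_abs, sq_abs, real_inner_comm]
    ring
  rw [h_inner, h_norm_deriv, norm_add_sq_real, norm_smul, real_inner_smul_right, mul_pow,
    Real.norm_two]
  ring

lemma mul_mul_two_mul_inner_le {x z : E} {y : ℝ} (ha : y ^ 2 ≤ a) :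
    y * (a - y ^ 2) * (2 * inner ℝ x z) ≤
      a / 2 * ‖x‖ ^ 2 + 2 * ((a - y ^ 2) ^ 2 * ‖z‖ ^ 2) :=
  have hV : 0 ≤ a - y ^ 2 := sub_nonneg.2 ha
  calc y * (a - y ^ 2) * (2 * inner ℝ x z)
      ≤ |y * (a - y ^ 2) * (2 * inner ℝ x z)| := le_abs_self _
    _ ≤ |y| * (a - y ^ 2) * (2 * (‖x‖ * ‖z‖)) := by
      rw [abs_mul, abs_mul, abs_mul, abs_two, abs_of_nonneg hV]
      gcongr
      exact abs_real_inner_le_norm _ _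
    _ ≤ |y| ^ 2 / 2 * ‖x‖ ^ 2 + 2 * ((a - y ^ 2) ^ 2 * ‖z‖ ^ 2) := by
      linarith [sq_nonneg (|y| * ‖x‖ - 2 * ((a - y ^ 2) * ‖z‖))]
    _ ≤ _ := by
      rw [sq_abs]
      gcongr

lemma mul_integral_sq_shearQuotient_le (h : α ≤ β) (ha₀ : 0 < a)
    (ha : ∀ y ∈ Set.Icc α β, y ^ 2 < a) (hp : ContDiff ℝ 1 p) (hα : p α = 0) (hβ : p β = 0) :
    a * ∫ y in α..β, ‖shearQuotient a p y‖ ^ 2 ≤ 9 / (2 * a) * (∫ y in α..β, ‖p y‖ ^ 2) +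
      2 * ∫ y in α..β, (a - y ^ 2) ^ 2 * ‖deriv (shearQuotient a p) y‖ ^ 2 := by
  have hp₀ := hp.continuous.continuousOn (s := Set.Icc α β)
  have hψ := continuousOn_shearQuotient ha hp.continuous
  have hψ' := continuousOn_deriv_shearQuotient ha hp
  have h_exact := integral_deriv_shearQuotient_eq_zero h ha hp hα hβ
  set ψ := shearQuotient a p
  have integrable {f : ℝ → ℝ} (hf : ContinuousOn f (Set.Icc α β)) :
      IntervalIntegrable f volume α β := hf.intervalIntegrable_of_Icc h
  have h_le : ∫ y in α..β, ((a - 3 * y ^ 2) * ‖ψ y‖ ^ 2 +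
        y * (a - y ^ 2) * (2 * inner ℝ (ψ y) (deriv ψ y))) ≤
      ∫ y in α..β, (9 / (2 * a) * ‖p y‖ ^ 2 + 2 * ((a - y ^ 2) ^ 2 * ‖deriv ψ y‖ ^ 2)
        - a * ‖ψ y‖ ^ 2) := by
    refine integral_mono_of_continuousOn h (by fun_prop) (by fun_prop) fun y hy => ?_
    have hV : 0 < a - y ^ 2 := sub_pos.2 (ha y hy)
    have h_norm_p : ‖p y‖ = (a - y ^ 2) * ‖ψ y‖ := by
      rw [← smul_shearQuotient (p := p) (ha y hy), norm_smul_of_nonneg hV.le]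
    have h_cross := mul_mul_two_mul_inner_le (x := ψ y) (z := deriv ψ y) (ha y hy).le
    have h_weight : 3 * (a - y ^ 2) ≤ a / 2 + 9 / (2 * a) * (a - y ^ 2) ^ 2 := by
      have : a / 2 + 9 / (2 * a) * (a - y ^ 2) ^ 2 - 3 * (a - y ^ 2) =
          (a - 3 * (a - y ^ 2)) ^ 2 / (2 * a) := by field_simp; ring
      linarith [show 0 ≤ (a - 3 * (a - y ^ 2)) ^ 2 / (2 * a) by positivity]
    rw [h_norm_p]
    linarith [mul_le_mul_of_nonneg_right h_weight (sq_nonneg ‖ψ y‖)]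
  rw [h_exact, intervalIntegral.integral_sub (integrable (by fun_prop)) (integrable (by fun_prop)),
    intervalIntegral.integral_add (integrable (by fun_prop)) (integrable (by fun_prop))] at h_le
  simp only [intervalIntegral.integral_const_mul] at h_le
  linarith

lemma shearForm_le_add_integral_shearQuotient (h : α ≤ β) (ha : ∀ y ∈ Set.Icc α β, y ^ 2 < a)
    (hp : Continuous p) (hw : ContinuousOn w (Set.Icc α β)) :
    shearForm a α β w ≤ 2 * shearForm a α β (fun y => w y + (2 : ℝ) • shearQuotient a p y) +
      8 * (a * ∫ y in α..β, ‖shearQuotient a p y‖ ^ 2) := by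
  have hψ := continuousOn_shearQuotient ha hp
  have integrable {f : ℝ → ℝ} (hf : ContinuousOn f (Set.Icc α β)) :
      IntervalIntegrable f volume α β := hf.intervalIntegrable_of_Icc h
  rw [shearForm, shearForm, ← intervalIntegral.integral_const_mul,
    ← intervalIntegral.integral_const_mul, ← intervalIntegral.integral_const_mul,
    ← intervalIntegral.integral_add (integrable (by fun_prop)) (integrable (by fun_prop))]
  refine integral_mono_of_continuousOn h (by fun_prop) (by fun_prop) fun y hy => ?_
  set v := shearQuotient a p y
  have hV : 0 ≤ a - y ^ 2 := sub_nonneg.2 (ha y hy).le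
  have h_norm : ‖w y‖ ^ 2 ≤ 2 * ‖w y + (2 : ℝ) • v‖ ^ 2 + 8 * ‖v‖ ^ 2 := by
    have h_tri : ‖w y‖ ≤ ‖w y + (2 : ℝ) • v‖ + 2 * ‖v‖ := by
      simpa [norm_smul] using norm_sub_le (w y + (2 : ℝ) • v) ((2 : ℝ) • v)
    nlinarith [norm_nonneg (w y), sq_nonneg (‖w y + (2 : ℝ) • v‖ - 2 * ‖v‖)]
  calc (a - y ^ 2) * ‖w y‖ ^ 2
      ≤ (a - y ^ 2) * (2 * ‖w y + (2 : ℝ) • v‖ ^ 2 + 8 * ‖v‖ ^ 2) := by gcongr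
    _ = 2 * ((a - y ^ 2) * ‖w y + (2 : ℝ) • v‖ ^ 2) + 8 * ((a - y ^ 2) * ‖v‖ ^ 2) := by ring
    _ ≤ 2 * ((a - y ^ 2) * ‖w y + (2 : ℝ) • v‖ ^ 2) + 8 * (a * ‖v‖ ^ 2) := by
      gcongr
      exact sub_le_self _ (sq_nonneg y)

namespace DirichletHelmholtzOn

lemma rayleighForm_eq (hp : DirichletHelmholtzOn K α β p w) (h : α ≤ β)
    (ha : ∀ y ∈ Set.Icc α β, y ^ 2 < a) :
    rayleighForm a K α β w p =
      shearForm a α β (fun y => w y + (2 : ℝ) • shearQuotient a p y) +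
      2 * (∫ y in α..β, (a - y ^ 2) ^ 2 * ‖deriv (shearQuotient a p) y‖ ^ 2) +
      2 * (K ^ 2 * ∫ y in α..β, ‖p y‖ ^ 2) := by
  have hp₁ : ContDiff ℝ 1 p := hp.contDiff.of_le one_le_two
  have hp₀ := hp.continuous
  have hw := hp.continuousOn_rhs
  have hψ := continuousOn_shearQuotient ha hp₀
  have hψ' := continuousOn_deriv_shearQuotient ha hp₁
  have integrable {f : ℝ → ℝ} (hf : ContinuousOn f (Set.Icc α β)) :
      IntervalIntegrable f volume α β := hf.intervalIntegrable_of_Icc h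
  have h_expand := intervalIntegral.integral_congr (μ := volume) fun y hy =>
    shear_mul_sq_norm_add_shearQuotient K (ha y (Set.uIcc_of_le h ▸ hy)) hp₁ (w y)
  rw [intervalIntegral.integral_add (integrable (by fun_prop)) (integrable (by fun_prop)),
    intervalIntegral.integral_sub (integrable (by fun_prop)) (integrable (by fun_prop)),
    intervalIntegral.integral_sub (integrable (by fun_prop)) (integrable (by fun_prop)),
    intervalIntegral.integral_add (integrable (by fun_prop)) (integrable (by fun_prop)),
    intervalIntegral.integral_add (integrable (by fun_prop)) (integrable (by fun_prop))]
    at h_expand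
  simp only [intervalIntegral.integral_const_mul] at h_expand
  rw [integral_deriv_shearQuotient_eq_zero h ha hp₁ hp.left hp.right,
    hp.integral_inner_eq_neg_energy h] at h_expand
  rw [rayleighForm, shearForm, shearForm, h_expand, helmholtzEnergy]
  ring

lemma two_mul_sq_integral_le_rayleighForm (hp : DirichletHelmholtzOn K α β p w) (h : α ≤ β)
    (ha : ∀ y ∈ Set.Icc α β, y ^ 2 < a) :
    2 * (K ^ 2 * ∫ y in α..β, ‖p y‖ ^ 2) ≤ rayleighForm a K α β w p := by
  have h_deriv : 0 ≤ ∫ y in α..β, (a - y ^ 2) ^ 2 * ‖deriv (shearQuotient a p) y‖ ^ 2 :=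
    intervalIntegral.integral_nonneg h fun _ _ => by positivity
  have h_shear := shearForm_nonneg (w := fun y => w y + (2 : ℝ) • shearQuotient a p y) h ha
  rw [hp.rayleighForm_eq h ha]
  linarith

lemma rayleighForm_nonneg (hp : DirichletHelmholtzOn K α β p w) (h : α ≤ β)
    (ha : ∀ y ∈ Set.Icc α β, y ^ 2 < a) : 0 ≤ rayleighForm a K α β w p := by
  have : 0 ≤ ∫ y in α..β, ‖p y‖ ^ 2 := intervalIntegral.integral_nonneg h fun _ _ => by positivity
  exact le_trans (by positivity) (hp.two_mul_sq_integral_le_rayleighForm h ha)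

lemma shearForm_le_mul_rayleighForm (hp : DirichletHelmholtzOn K α β p w) (h : α ≤ β)
    (ha₀ : 0 < a) (ha : ∀ y ∈ Set.Icc α β, y ^ 2 < a) (hKa : 1 ≤ 16 * (K ^ 2 * a)) :
    shearForm a α β w ≤ 288 * rayleighForm a K α β w p := by
  have hp₁ : ContDiff ℝ 1 p := hp.contDiff.of_le one_le_two
  have h_split := shearForm_le_add_integral_shearQuotient h ha hp.continuous hp.continuousOn_rhs
  have h_quot := mul_integral_sq_shearQuotient_le h ha₀ ha hp₁ hp.left hp.right
  have h_shear := shearForm_nonneg (w := fun y => w y + (2 : ℝ) • shearQuotient a p y) h ha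
  have h_deriv : 0 ≤ ∫ y in α..β, (a - y ^ 2) ^ 2 * ‖deriv (shearQuotient a p) y‖ ^ 2 :=
    intervalIntegral.integral_nonneg h fun _ _ => by positivity
  have h_p : 0 ≤ ∫ y in α..β, ‖p y‖ ^ 2 :=
    intervalIntegral.integral_nonneg h fun _ _ => by positivity
  have h_coeff : 9 / (2 * a) ≤ 72 * K ^ 2 := by
    rw [div_le_iff₀ (by positivity)]
    linarith
  rw [hp.rayleighForm_eq h ha]
  linarith [mul_le_mul_of_nonneg_right h_coeff h_p]

end DirichletHelmholtzOn

section Hardy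

variable {γ : ℝ} {g g' : ℝ → E} {v : E}

-- The alternatives at each end make the boundary terms of the integration by parts vanish.
lemma hardy_inequality (h : α ≤ β) (hg : ∀ y ∈ Set.Icc α β, HasDerivAt g (g' y) y)
    (hg' : ContinuousOn g' (Set.Icc α β)) (hα : γ = α ∨ g α = v) (hβ : γ = β ∨ g β = v) :
    ∫ y in α..β, ‖g y - v‖ ^ 2 ≤ 4 * ∫ y in α..β, (γ - y) ^ 2 * ‖g' y‖ ^ 2 := by
  have hgc : ContinuousOn g (Set.Icc α β) := fun y hy => (hg y hy).continuousAt.continuousWithinAt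
  have integrable {f : ℝ → ℝ} (hf : ContinuousOn f (Set.Icc α β)) :
      IntervalIntegrable f volume α β := hf.intervalIntegrable_of_Icc h
  have h_parts : ∫ y in α..β, (-1 * ‖g y - v‖ ^ 2 + (γ - y) * (2 * inner ℝ (g y - v) (g' y)))
      = 0 := by
    rw [intervalIntegral.integral_eq_sub_of_hasDerivAt (f := fun y => (γ - y) * ‖g y - v‖ ^ 2)]
    · have hα' : (γ - α) * ‖g α - v‖ ^ 2 = 0 := by rcases hα with rfl | hα <;> simp [*]
      have hβ' : (γ - β) * ‖g β - v‖ ^ 2 = 0 := by rcases hβ with rfl | hβ <;> simp [*]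
      rw [hα', hβ', sub_zero]
    · intro y hy
      rw [Set.uIcc_of_le h] at hy
      exact ((hasDerivAt_id y).const_sub γ).mul ((hg y hy).sub_const v).norm_sq
    · exact integrable (by fun_prop)
  have h_le : ∫ y in α..β, (-1 * ‖g y - v‖ ^ 2 + (γ - y) * (2 * inner ℝ (g y - v) (g' y))) ≤
      ∫ y in α..β, (2 * ((γ - y) ^ 2 * ‖g' y‖ ^ 2) - 1 / 2 * ‖g y - v‖ ^ 2) := by
    refine integral_mono_of_continuousOn h (by fun_prop) (by fun_prop) fun y _ => ?_
    have h_sq := norm_sub_sq_real (g y - v) ((2 * (γ - y)) • g' y)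
    rw [norm_smul, mul_pow, norm_eq_abs, sq_abs, real_inner_smul_right] at h_sq
    linarith [sq_nonneg ‖g y - v - (2 * (γ - y)) • g' y‖]
  rw [h_parts, intervalIntegral.integral_sub (integrable (by fun_prop)) (integrable (by fun_prop)),
    intervalIntegral.integral_const_mul, intervalIntegral.integral_const_mul] at h_le
  linarith

lemma sq_mul_integral_sq_norm_sub_le (hc : 0 < c) (ha : c ^ 2 < a)
    (hg : ∀ y ∈ Set.Icc (-c) c, HasDerivAt g (g' y) y)
    (hg' : ContinuousOn g' (Set.Icc (-c) c)) :
    c ^ 2 * ∫ y in (-c)..c, ‖g y - g 0‖ ^ 2 ≤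
      4 * ∫ y in (-c)..c, (a - y ^ 2) ^ 2 * ‖g' y‖ ^ 2 := by
  have hgc : ContinuousOn g (Set.Icc (-c) c) :=
    fun y hy => (hg y hy).continuousAt.continuousWithinAt
  have h_half {α β γ : ℝ} (h : α ≤ β) (h_sub : Set.Icc α β ⊆ Set.Icc (-c) c)
      (hα : γ = α ∨ α = 0) (hβ : γ = β ∨ β = 0)
      (hγ : ∀ y ∈ Set.Icc α β, (c * (γ - y)) ^ 2 ≤ (a - y ^ 2) ^ 2) :
      c ^ 2 * ∫ y in α..β, ‖g y - g 0‖ ^ 2 ≤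
        4 * ∫ y in α..β, (a - y ^ 2) ^ 2 * ‖g' y‖ ^ 2 := by
    have hg'_sub := hg'.mono h_sub
    have h_hardy := hardy_inequality (v := g 0) h (fun y hy => hg y (h_sub hy)) hg'_sub
      (hα.imp_right (congrArg g)) (hβ.imp_right (congrArg g))
    calc c ^ 2 * ∫ y in α..β, ‖g y - g 0‖ ^ 2
        ≤ c ^ 2 * (4 * ∫ y in α..β, (γ - y) ^ 2 * ‖g' y‖ ^ 2) := by gcongr
      _ = 4 * ∫ y in α..β, (c * (γ - y)) ^ 2 * ‖g' y‖ ^ 2 := by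
        rw [mul_left_comm, ← intervalIntegral.integral_const_mul]
        simp only [mul_pow, mul_assoc]
      _ ≤ _ := by
        gcongr
        exact integral_mono_of_continuousOn h (by fun_prop) (by fun_prop) fun y hy =>
          mul_le_mul_of_nonneg_right (hγ y hy) (sq_nonneg _)
  have h_left := h_half (γ := -c) (neg_nonpos.2 hc.le) (Set.Icc_subset_Icc le_rfl hc.le)
    (.inl rfl) (.inr rfl) fun y hy => by
      rw [← neg_sq (c * _)]
      exact pow_le_pow_left₀ (by nlinarith [hy.1]) (by nlinarith [hy.1, hy.2]) 2
  have h_right := h_half (γ := c) hc.le (Set.Icc_subset_Icc (neg_nonpos.2 hc.le) le_rfl)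
    (.inr rfl) (.inl rfl) fun y hy =>
      pow_le_pow_left₀ (by nlinarith [hy.2]) (by nlinarith [hy.1, hy.2]) 2
  rw [integral_split_of_continuousOn (neg_nonpos.2 hc.le) hc.le (by fun_prop),
    integral_split_of_continuousOn (g := fun y => (a - y ^ 2) ^ 2 * ‖g' y‖ ^ 2)
      (neg_nonpos.2 hc.le) hc.le (by fun_prop)]
  linarith

lemma mul_integral_sq_norm_le [CompleteSpace E] (h : α ≤ β) (hg : ContinuousOn g (Set.Icc α β))
    (v : E) :
    (β - α) * ∫ y in α..β, ‖g y‖ ^ 2 ≤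
      ‖∫ y in α..β, g y‖ ^ 2 + (β - α) * ∫ y in α..β, ‖g y - v‖ ^ 2 := by
  have hgi : IntervalIntegrable g volume α β := hg.intervalIntegrable_of_Icc h
  have integrable {f : ℝ → ℝ} (hf : ContinuousOn f (Set.Icc α β)) :
      IntervalIntegrable f volume α β := hf.intervalIntegrable_of_Icc h
  have h_inner : ∫ y in α..β, inner ℝ v (g y) = inner ℝ v (∫ y in α..β, g y) :=
    (innerSL ℝ v).intervalIntegral_comp_comm hgi
  have h_expand : ∫ y in α..β, ‖g y - v‖ ^ 2 =
      (∫ y in α..β, ‖g y‖ ^ 2) - 2 * inner ℝ v (∫ y in α..β, g y) + (β - α) * ‖v‖ ^ 2 := by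
    simp only [norm_sub_sq_real, real_inner_comm v]
    rw [intervalIntegral.integral_add (integrable (by fun_prop)) (integrable (by fun_prop)),
      intervalIntegral.integral_sub (integrable (by fun_prop)) (integrable (by fun_prop)),
      intervalIntegral.integral_const_mul, h_inner, intervalIntegral.integral_const, smul_eq_mul]
  have h_sq := norm_sub_sq_real (∫ y in α..β, g y) ((β - α) • v)
  rw [norm_smul, mul_pow, norm_eq_abs, sq_abs, real_inner_smul_right, real_inner_comm] at h_sq
  rw [h_expand]
  nlinarith [sq_nonneg ‖(∫ y in α..β, g y) - (β - α) • v‖]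

end Hardy

lemma sq_norm_integral_shearQuotient_le [CompleteSpace E] (h : α ≤ β)
    (ha : ∀ y ∈ Set.Icc α β, y ^ 2 < a) (hp : Continuous p) (hw : ContinuousOn w (Set.Icc α β)) :
    2 * ‖∫ y in α..β, shearQuotient a p y‖ ^ 2 ≤ ‖∫ y in α..β, w y‖ ^ 2 +
      (∫ y in α..β, (a - y ^ 2)⁻¹) *
        shearForm a α β (fun y => w y + (2 : ℝ) • shearQuotient a p y) := by
  have hψ := continuousOn_shearQuotient ha hp
  have h_cs := sq_integral_le_integral_inv_mul h (ρ := fun y => a - y ^ 2)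
    (g := fun y => ‖w y + (2 : ℝ) • shearQuotient a p y‖) (by fun_prop) (by fun_prop)
    fun y hy => sub_pos.2 (ha y hy)
  have h_norm : 2 * ‖∫ y in α..β, shearQuotient a p y‖ ≤
      (∫ y in α..β, ‖w y + (2 : ℝ) • shearQuotient a p y‖) + ‖∫ y in α..β, w y‖ := by
    have h_sum := intervalIntegral.integral_add (μ := volume) (hw.intervalIntegrable_of_Icc h)
      ((hψ.const_smul (2 : ℝ)).intervalIntegrable_of_Icc h)
    simp only [Pi.smul_apply, intervalIntegral.integral_smul] at h_sum
    calc 2 * ‖∫ y in α..β, shearQuotient a p y‖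
        = ‖(∫ y in α..β, (w y + (2 : ℝ) • shearQuotient a p y)) - ∫ y in α..β, w y‖ := by
          rw [h_sum, add_sub_cancel_left, norm_smul, Real.norm_two]
      _ ≤ ‖∫ y in α..β, (w y + (2 : ℝ) • shearQuotient a p y)‖ + ‖∫ y in α..β, w y‖ :=
          norm_sub_le _ _
      _ ≤ _ := by
          gcongr
          exact intervalIntegral.norm_integral_le_integral_norm h
  rw [shearForm]
  nlinarith [norm_nonneg (∫ y in α..β, shearQuotient a p y),
    sq_nonneg ((∫ y in α..β, ‖w y + (2 : ℝ) • shearQuotient a p y‖) - ‖∫ y in α..β, w y‖)]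

-- Without a lower bound on `K ^ 2 * a` the mean of `w` has to be controlled separately: it
-- compensates for the direction `p = a - y ^ 2`, on which `deriv (shearQuotient a p)` vanishes.
lemma DirichletHelmholtzOn.shearForm_le_add_sq_integral [CompleteSpace E]
    (hp : DirichletHelmholtzOn K (-c) c p w) (hc : 0 < c) (ha : c ^ 2 < a)
    (ha4 : a ≤ 4 * c ^ 2) :
    shearForm a (-c) c w ≤
      (64 + 8 * c * ∫ y in (-c)..c, (a - y ^ 2)⁻¹) * rayleighForm a K (-c) c w p +
        8 * c * ‖∫ y in (-c)..c, w y‖ ^ 2 := by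
  have hcc : -c ≤ c := by linarith
  have ha' : ∀ y ∈ Set.Icc (-c) c, y ^ 2 < a := fun y hy => (sq_le_sq' hy.1 hy.2).trans_lt ha
  have hp₁ : ContDiff ℝ 1 p := hp.contDiff.of_le one_le_two
  have hψ := continuousOn_shearQuotient ha' hp.continuous
  have hw := hp.continuousOn_rhs
  have h_split := shearForm_le_add_integral_shearQuotient hcc ha' hp.continuous hw
  have h_form := hp.rayleighForm_eq hcc ha'
  have h_hardy := sq_mul_integral_sq_norm_sub_le hc ha
    (fun y hy => (hasDerivAt_shearQuotient (ha' y hy) hp₁).differentiableAt.hasDerivAt)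
    (continuousOn_deriv_shearQuotient ha' hp₁)
  have h_poincare := mul_integral_sq_norm_le hcc hψ (shearQuotient a p 0)
  have h_mean := sq_norm_integral_shearQuotient_le hcc ha' hp.continuous hw
  have h_shear := shearForm_nonneg (w := fun y => w y + (2 : ℝ) • shearQuotient a p y) hcc ha'
  have h_inv : 0 ≤ ∫ y in (-c)..c, (a - y ^ 2)⁻¹ :=
    intervalIntegral.integral_nonneg hcc fun y hy => inv_nonneg.2 (sub_pos.2 (ha' y hy)).le
  have integral_nonneg {f : ℝ → ℝ} (hf : ∀ y, 0 ≤ f y) : 0 ≤ ∫ y in (-c)..c, f y :=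
    intervalIntegral.integral_nonneg hcc fun y _ => hf y
  have h_ψ := integral_nonneg fun y => sq_nonneg ‖shearQuotient a p y‖
  have h_p := mul_nonneg (sq_nonneg K) (integral_nonneg fun y => sq_nonneg ‖p y‖)
  have h_deriv := integral_nonneg fun y =>
    mul_nonneg (sq_nonneg (a - y ^ 2)) (sq_nonneg ‖deriv (shearQuotient a p) y‖)
  have h_quot : a * (∫ y in (-c)..c, ‖shearQuotient a p y‖ ^ 2) ≤
      2 * c * ‖∫ y in (-c)..c, shearQuotient a p y‖ ^ 2 +
        16 * ∫ y in (-c)..c, (a - y ^ 2) ^ 2 * ‖deriv (shearQuotient a p) y‖ ^ 2 := by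
    linarith [mul_le_mul_of_nonneg_right ha4 h_ψ, mul_le_mul_of_nonneg_left h_poincare hc.le]
  have h_loss := mul_nonneg (mul_nonneg hc.le h_inv) (add_nonneg h_deriv h_p)
  rw [h_form]
  linarith [mul_le_mul_of_nonneg_left h_mean hc.le]

end Coercivity

section LebesgueNorms

variable {f g : ℝ → ℂ} {α β : ℝ}

lemma l2_nonneg (g : ℝ → ℂ) : 0 ≤ l2 g := Real.sqrt_nonneg _

lemma l1_nonneg (g : ℝ → ℂ) : 0 ≤ l1 g :=
  intervalIntegral.integral_nonneg (by norm_num) fun _ _ => norm_nonneg _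

lemma sq_l2 (g : ℝ → ℂ) : l2 g ^ 2 = ∫ y in (-1 : ℝ)..1, ‖g y‖ ^ 2 :=
  Real.sq_sqrt (intervalIntegral.integral_nonneg (by norm_num) fun _ _ => sq_nonneg _)

lemma integral_norm_mul_norm_le_l2_mul_l2 (h₁ : -1 ≤ α) (h₂ : α ≤ β) (h₃ : β ≤ 1)
    (hf : ContinuousOn f (Set.Icc (-1) 1)) (hg : ContinuousOn g (Set.Icc (-1) 1)) :
    ∫ y in α..β, ‖f y‖ * ‖g y‖ ≤ l2 f * l2 g := by
  refine (integral_le_integral_of_subinterval h₁ h₂ h₃ (by fun_prop) fun y _ => by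
    positivity).trans ?_
  refine le_of_sq_le_sq ?_ (mul_nonneg (l2_nonneg f) (l2_nonneg g))
  rw [mul_pow, sq_l2, sq_l2]
  exact sq_integral_mul_le (by norm_num) hf.norm hg.norm

lemma integral_sq_norm_le_sq_l2 (h₁ : -1 ≤ α) (h₂ : α ≤ β) (h₃ : β ≤ 1)
    (hg : ContinuousOn g (Set.Icc (-1) 1)) : ∫ y in α..β, ‖g y‖ ^ 2 ≤ l2 g ^ 2 :=
  sq_l2 g ▸ integral_le_integral_of_subinterval h₁ h₂ h₃ (by fun_prop) fun _ _ => sq_nonneg _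

lemma sq_integral_norm_le_mul_sq_l2 (h₁ : -1 ≤ α) (h₂ : α ≤ β) (h₃ : β ≤ 1)
    (hg : ContinuousOn g (Set.Icc (-1) 1)) :
    (∫ y in α..β, ‖g y‖) ^ 2 ≤ (β - α) * l2 g ^ 2 :=
  (sq_integral_le_mul_integral_sq h₂ (hg.norm.mono (Set.Icc_subset_Icc h₁ h₃))).trans
    (mul_le_mul_of_nonneg_left (integral_sq_norm_le_sq_l2 h₁ h₂ h₃ hg) (sub_nonneg.2 h₂))

lemma sq_l1_le (hg : ContinuousOn g (Set.Icc (-1) 1)) : l1 g ^ 2 ≤ 2 * l2 g ^ 2 :=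
  (sq_integral_norm_le_mul_sq_l2 le_rfl (by norm_num) le_rfl hg).trans_eq (by norm_num)

end LebesgueNorms

/-- The Orr–Sommerfeld equation divided by `|k₁|`: the viscosity is `ε = ν / |k₁|`, the sign
`s = ±1` is that of `k₁`, and `a = 1 - λ`, so that the critical layers sit at `y = ±√a`. -/
structure SlipProblem (ε K a s : ℝ) (w φ f : ℝ → ℂ) : Prop where
  viscosity_pos : 0 < ε
  one_le_wavenumber : 1 ≤ K
  sq_sign : s ^ 2 = 1
  contDiff : ContDiff ℝ 2 w
  left : w (-1) = 0
  right : w 1 = 0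
  stream : DirichletHelmholtzOn K (-1) 1 φ w
  eqn : ∀ y ∈ Set.Icc (-1 : ℝ) 1,
    f y = -(ε • (deriv (deriv w) y - K ^ 2 • w y)) +
      Complex.I * (s • ((a - y ^ 2) • w y + (2 : ℝ) • φ y))

lemma integral_inner_I_mul_deriv_deriv {g : ℝ → ℂ} (hg : ContDiff ℝ 2 g) (α β : ℝ) :
    ∫ y in α..β, inner ℝ (Complex.I * g y) (deriv (deriv g) y) =
      inner ℝ (Complex.I * g β) (deriv g β) - inner ℝ (Complex.I * g α) (deriv g α) := by
  have hg' : ContDiff ℝ 1 (deriv g) := hg.deriv'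
  have hg₀ := hg.continuous
  rw [intervalIntegral.integral_eq_sub_of_hasDerivAt
    (f := fun y => inner ℝ (Complex.I * g y) (deriv g y)) (fun y _ => ?_)
    (Continuous.intervalIntegrable (by fun_prop) _ _)]
  refine (((hg.differentiable two_ne_zero y).hasDerivAt.const_mul Complex.I).inner ℝ
    (hg'.differentiable_one y).hasDerivAt).congr_deriv ?_
  simp [Complex.inner]
  ring

namespace SlipProblem

variable {ε K a s α β : ℝ} {w φ f : ℝ → ℂ}

lemma continuous (H : SlipProblem ε K a s w φ f) : Continuous w := H.contDiff.continuous

lemma contDiff_deriv (H : SlipProblem ε K a s w φ f) : ContDiff ℝ 1 (deriv w) :=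
  H.contDiff.deriv'

lemma continuous_deriv (H : SlipProblem ε K a s w φ f) : Continuous (deriv w) :=
  H.contDiff_deriv.continuous

lemma continuous_deriv_deriv (H : SlipProblem ε K a s w φ f) : Continuous (deriv (deriv w)) :=
  H.contDiff_deriv.continuous_deriv_one

lemma continuousOn_forcing (H : SlipProblem ε K a s w φ f) :
    ContinuousOn f (Set.Icc (-1) 1) := by
  have hw := H.continuous
  have hw'' := H.continuous_deriv_deriv
  have hφ := H.stream.continuous
  exact ContinuousOn.congr (by fun_prop) H.eqn

lemma abs_sign (H : SlipProblem ε K a s w φ f) : |s| = 1 := by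
  rw [← sqrt_sq_eq_abs, H.sq_sign, sqrt_one]

lemma shear_mul_sq_norm_eq (H : SlipProblem ε K a s w φ f) {y : ℝ}
    (hy : y ∈ Set.Icc (-1 : ℝ) 1) :
    (a - y ^ 2) * ‖w y‖ ^ 2 + 2 * inner ℝ (φ y) (w y) =
      s * inner ℝ (Complex.I * w y) (f y) +
        s * ε * inner ℝ (Complex.I * w y) (deriv (deriv w) y) := by
  rw [H.eqn y hy, Complex.sq_norm, Complex.normSq_apply]
  simp only [Complex.inner, map_mul, Complex.conj_I, Complex.real_smul, Complex.add_re,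
    Complex.mul_re, Complex.neg_re, Complex.I_re, Complex.I_im, Complex.neg_im, Complex.mul_im,
    Complex.conj_re, Complex.conj_im, Complex.add_im, Complex.ofReal_re, Complex.ofReal_im,
    Complex.sub_re, Complex.sub_im]
  linear_combination (-((a - y ^ 2) * ((w y).re * (w y).re + (w y).im * (w y).im) +
    2 * ((φ y).re * (w y).re + (φ y).im * (w y).im))) * H.sq_sign

lemma abs_shearForm_add_le (H : SlipProblem ε K a s w φ f) (h₁ : -1 ≤ α) (h₂ : α ≤ β)
    (h₃ : β ≤ 1) :
    |shearForm a α β w + 2 * ∫ y in α..β, inner ℝ (φ y) (w y)| ≤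
      l2 f * l2 w + ε * (‖deriv w α‖ * ‖w α‖ + ‖deriv w β‖ * ‖w β‖) := by
  have hw := H.continuous
  have hw'' := H.continuous_deriv_deriv
  have hφ := H.stream.continuous
  have h_sub := Set.Icc_subset_Icc h₁ h₃
  have hf := H.continuousOn_forcing.mono h_sub
  have integrable {g : ℝ → ℝ} (hg : ContinuousOn g (Set.Icc α β)) :
      IntervalIntegrable g volume α β := hg.intervalIntegrable_of_Icc h₂
  have h_inner (z v : ℂ) : |inner ℝ (Complex.I * z) v| ≤ ‖v‖ * ‖z‖ := by
    simpa [mul_comm] using abs_real_inner_le_norm (Complex.I * z) v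
  have h_eq := intervalIntegral.integral_congr (μ := volume) fun y hy =>
    H.shear_mul_sq_norm_eq (h_sub (Set.uIcc_of_le h₂ ▸ hy))
  rw [intervalIntegral.integral_add (integrable (by fun_prop)) (integrable (by fun_prop)),
    intervalIntegral.integral_add (integrable (by fun_prop)) (integrable (by fun_prop)),
    intervalIntegral.integral_const_mul, intervalIntegral.integral_const_mul,
    intervalIntegral.integral_const_mul, integral_inner_I_mul_deriv_deriv H.contDiff] at h_eq
  have h_forcing : |∫ y in α..β, inner ℝ (Complex.I * w y) (f y)| ≤ l2 f * l2 w :=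
    calc |∫ y in α..β, inner ℝ (Complex.I * w y) (f y)|
        ≤ ∫ y in α..β, |inner ℝ (Complex.I * w y) (f y)| :=
          intervalIntegral.abs_integral_le_integral_abs h₂
      _ ≤ ∫ y in α..β, ‖f y‖ * ‖w y‖ :=
          integral_mono_of_continuousOn h₂ (by fun_prop) (by fun_prop) fun y _ => h_inner _ _
      _ ≤ l2 f * l2 w :=
          integral_norm_mul_norm_le_l2_mul_l2 h₁ h₂ h₃ H.continuousOn_forcing hw.continuousOn
  rw [shearForm, h_eq]
  refine (abs_add_le _ _).trans ?_
  rw [abs_mul, abs_mul, abs_mul, H.abs_sign, abs_of_pos H.viscosity_pos, one_mul, one_mul]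
  have hε := H.viscosity_pos
  gcongr
  exact (abs_sub _ _).trans (by linarith [h_inner (w α) (deriv w α), h_inner (w β) (deriv w β)])

lemma abs_rayleighForm_le (H : SlipProblem ε K a s w φ f) :
    |rayleighForm a K (-1) 1 w φ| ≤ l2 f * l2 w := by
  have h := H.abs_shearForm_add_le le_rfl (by norm_num) le_rfl
  rw [H.stream.integral_inner_eq_neg_energy (by norm_num), H.left, H.right] at h
  simpa [rayleighForm, ← sub_eq_add_neg] using h

lemma mul_helmholtzEnergy_eq_integral_inner (H : SlipProblem ε K a s w φ f) :
    ε * helmholtzEnergy K (-1) 1 w = ∫ y in (-1 : ℝ)..1, inner ℝ (w y) (f y) := by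
  have hw := H.continuous
  have hw'' := H.continuous_deriv_deriv
  have hφ := H.stream.continuous
  have hφ'' := H.stream.continuous_deriv_deriv
  have h_dirichlet : DirichletHelmholtzOn K (-1) 1 w fun y => deriv (deriv w) y - K ^ 2 • w y :=
    { contDiff := H.contDiff, eqn := fun _ _ => rfl, left := H.left, right := H.right }
  have h_energy := h_dirichlet.integral_inner_eq_neg_energy (by norm_num)
  have h_stream : ∫ y in (-1 : ℝ)..1, inner ℝ (Complex.I * φ y) (deriv (deriv φ) y) = 0 := by
    rw [integral_inner_I_mul_deriv_deriv H.stream.contDiff, H.stream.left, H.stream.right]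
    simp
  have h_eq : ∫ y in (-1 : ℝ)..1, inner ℝ (w y) (f y) = ∫ y in (-1 : ℝ)..1,
      (-ε * inner ℝ (w y) (deriv (deriv w) y - K ^ 2 • w y) +
        2 * s * inner ℝ (Complex.I * φ y) (deriv (deriv φ) y)) := by
    refine intervalIntegral.integral_congr fun y hy => ?_
    rw [Set.uIcc_of_le (by norm_num)] at hy
    have h_re := congrArg Complex.re (H.stream.eqn y hy)
    have h_im := congrArg Complex.im (H.stream.eqn y hy)
    simp only [H.eqn y hy, Complex.inner, map_mul, Complex.conj_I, Complex.real_smul,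
      Complex.add_re, Complex.mul_re, Complex.neg_re, Complex.I_re, Complex.I_im, Complex.neg_im,
      Complex.mul_im, Complex.conj_re, Complex.conj_im, Complex.add_im, Complex.sub_re,
      Complex.sub_im, Complex.ofReal_re, Complex.ofReal_im] at h_re h_im ⊢
    linear_combination 2 * s * ((φ y).im * h_re - (φ y).re * h_im)
  rw [h_eq, intervalIntegral.integral_add (Continuous.intervalIntegrable (by fun_prop) _ _)
    (Continuous.intervalIntegrable (by fun_prop) _ _), intervalIntegral.integral_const_mul,
    intervalIntegral.integral_const_mul, h_energy, h_stream]
  ring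

lemma dissipation_le (H : SlipProblem ε K a s w φ f) :
    ε * (l2 (deriv w) ^ 2 + K ^ 2 * l2 w ^ 2) ≤ l2 f * l2 w := by
  have hw := H.continuous
  have hw' := H.continuous_deriv
  have hf := H.continuousOn_forcing
  rw [sq_l2, sq_l2, ← intervalIntegral.integral_const_mul, ← intervalIntegral.integral_add
    (Continuous.intervalIntegrable (by fun_prop) _ _)
    (Continuous.intervalIntegrable (by fun_prop) _ _)]
  calc ε * helmholtzEnergy K (-1) 1 w
      = ∫ y in (-1 : ℝ)..1, inner ℝ (w y) (f y) := H.mul_helmholtzEnergy_eq_integral_inner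
    _ ≤ ∫ y in (-1 : ℝ)..1, ‖f y‖ * ‖w y‖ :=
        integral_mono_of_continuousOn (by norm_num) (by fun_prop) (by fun_prop) fun y _ =>
          (real_inner_le_norm _ _).trans_eq (mul_comm _ _)
    _ ≤ l2 f * l2 w := integral_norm_mul_norm_le_l2_mul_l2 le_rfl (by norm_num) le_rfl hf
        hw.continuousOn

lemma mul_sq_l2_deriv_le (H : SlipProblem ε K a s w φ f) :
    ε * l2 (deriv w) ^ 2 ≤ l2 f * l2 w :=
  le_trans (by gcongr; exacts [H.viscosity_pos.le, le_add_of_nonneg_right (by positivity)])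
    H.dissipation_le

lemma mul_sq_wavenumber_mul_l2_le (H : SlipProblem ε K a s w φ f) :
    ε * K ^ 2 * l2 w ≤ l2 f := by
  have hε := H.viscosity_pos
  rcases (l2_nonneg w).eq_or_lt with hw | hw
  · simpa [← hw] using l2_nonneg f
  · refine le_of_mul_le_mul_right ?_ hw
    calc ε * K ^ 2 * l2 w * l2 w = ε * (0 + K ^ 2 * l2 w ^ 2) := by ring
      _ ≤ ε * (l2 (deriv w) ^ 2 + K ^ 2 * l2 w ^ 2) := by gcongr; positivity
      _ ≤ l2 f * l2 w := H.dissipation_le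

end SlipProblem

section WeightedInequalities

variable {α β κ M b : ℝ}

lemma sq_integral_sq_norm_le_mul_integral_sq_deriv {E : Type*} [NormedAddCommGroup E]
    [InnerProductSpace ℝ E] {g : ℝ → E} (h : α ≤ β) (hg : ContDiff ℝ 1 g) (hα : g α = 0)
    (hβ : g β = 0) :
    (∫ y in α..β, ‖g y‖ ^ 2) ^ 2 ≤
      4 * ((∫ y in α..β, y ^ 2 * ‖g y‖ ^ 2) * ∫ y in α..β, ‖deriv g y‖ ^ 2) := by
  have hg₀ := hg.continuous
  have integrable {f : ℝ → ℝ} (hf : Continuous f) : IntervalIntegrable f volume α β :=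
    hf.intervalIntegrable _ _
  have h_parts : ∫ y in α..β, (1 * ‖g y‖ ^ 2 + y * (2 * inner ℝ (g y) (deriv g y))) = 0 := by
    rw [intervalIntegral.integral_eq_sub_of_hasDerivAt (f := fun y => y * ‖g y‖ ^ 2)
      (fun y _ => (hasDerivAt_id y).mul (hg.differentiable_one y).hasDerivAt.norm_sq)
      (integrable (by fun_prop))]
    simp [hα, hβ]
  have h_le : ∫ y in α..β, ‖g y‖ ^ 2 ≤ 2 * ∫ y in α..β, (|y| * ‖g y‖) * ‖deriv g y‖ := by
    rw [← sub_nonpos, ← h_parts, ← intervalIntegral.integral_const_mul,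
      ← intervalIntegral.integral_sub (integrable (by fun_prop)) (integrable (by fun_prop))]
    refine integral_mono_of_continuousOn h (by fun_prop) (by fun_prop) fun y _ => ?_
    have h_inner : |y * inner ℝ (g y) (deriv g y)| ≤ |y| * (‖g y‖ * ‖deriv g y‖) := by
      rw [abs_mul]
      gcongr
      exact abs_real_inner_le_norm _ _
    linarith [neg_le_of_abs_le h_inner]
  have h_nonneg : 0 ≤ ∫ y in α..β, ‖g y‖ ^ 2 :=
    intervalIntegral.integral_nonneg h fun _ _ => sq_nonneg _
  calc (∫ y in α..β, ‖g y‖ ^ 2) ^ 2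
      ≤ (2 * ∫ y in α..β, (|y| * ‖g y‖) * ‖deriv g y‖) ^ 2 := by gcongr
    _ = 4 * (∫ y in α..β, (|y| * ‖g y‖) * ‖deriv g y‖) ^ 2 := by ring
    _ ≤ 4 * ((∫ y in α..β, (|y| * ‖g y‖) ^ 2) * ∫ y in α..β, ‖deriv g y‖ ^ 2) := by
      gcongr
      exact sq_integral_mul_le h (by fun_prop) (by fun_prop)
    _ = _ := by simp only [mul_pow, sq_abs]

lemma integral_inv_sq_add_sq_le {σ : ℝ} (hσ : 0 < σ) (α β : ℝ) :
    ∫ y in α..β, (σ ^ 2 + y ^ 2)⁻¹ ≤ 4 / σ := by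
  rw [integral_inv_sq_add_sq hσ.ne', div_eq_inv_mul 4]
  refine mul_le_mul_of_nonneg_left ?_ (inv_pos.2 hσ).le
  linarith [arctan_lt_pi_div_two (β / σ), neg_pi_div_two_lt_arctan (α / σ), pi_le_four]

lemma mul_sq_integral_norm_le {E : Type*} [NormedAddCommGroup E] {g : ℝ → E} {σ : ℝ} (hσ : 0 < σ)
    (h : α ≤ β) (hg : ContinuousOn g (Set.Icc α β)) :
    σ * (∫ y in α..β, ‖g y‖) ^ 2 ≤
      4 * (σ ^ 2 * (∫ y in α..β, ‖g y‖ ^ 2) + ∫ y in α..β, y ^ 2 * ‖g y‖ ^ 2) := by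
  have h_cs := sq_integral_le_integral_inv_mul h (ρ := fun y => σ ^ 2 + y ^ 2)
    (g := fun y => ‖g y‖) (by fun_prop) (by fun_prop) fun y _ => by positivity
  have h_eq : ∫ y in α..β, (σ ^ 2 + y ^ 2) * ‖g y‖ ^ 2 =
      σ ^ 2 * (∫ y in α..β, ‖g y‖ ^ 2) + ∫ y in α..β, y ^ 2 * ‖g y‖ ^ 2 := by
    simp only [add_mul]
    rw [intervalIntegral.integral_add, intervalIntegral.integral_const_mul] <;>
      exact ContinuousOn.intervalIntegrable_of_Icc h (by fun_prop)
  have h_nonneg : 0 ≤ ∫ y in α..β, (σ ^ 2 + y ^ 2) * ‖g y‖ ^ 2 :=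
    intervalIntegral.integral_nonneg h fun _ _ => by positivity
  calc σ * (∫ y in α..β, ‖g y‖) ^ 2
      ≤ σ * (4 / σ * ∫ y in α..β, (σ ^ 2 + y ^ 2) * ‖g y‖ ^ 2) := by
        gcongr
        exact h_cs.trans (mul_le_mul_of_nonneg_right (integral_inv_sq_add_sq_le hσ α β) h_nonneg)
    _ = _ := by
        rw [h_eq]
        field_simp

lemma mul_integral_le_integral_mul_add_volume {ρ g : ℝ → ℝ} (h : α ≤ β) (hρ : Continuous ρ)
    (hg : ContinuousOn g (Set.Icc α β)) (hρ₀ : ∀ y ∈ Set.Icc α β, 0 ≤ ρ y)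
    (hg₀ : ∀ y ∈ Set.Icc α β, 0 ≤ g y) (hM : ∀ y ∈ Set.Icc α β, g y ≤ M) (hκ : 0 ≤ κ) :
    κ * ∫ y in α..β, g y ≤
      (∫ y in α..β, ρ y * g y) + κ * M * volume.real {y ∈ Set.Ioc α β | ρ y < κ} := by
  set S := {y | ρ y < κ}
  have hS : MeasurableSet S := measurableSet_lt hρ.measurable measurable_const
  have integrable {f : ℝ → ℝ} (hf : ContinuousOn f (Set.Icc α β)) :
      IntegrableOn f (Set.Ioc α β) :=
    (hf.integrableOn_compact isCompact_Icc).mono_set Set.Ioc_subset_Icc_self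
  have h_indicator : IntegrableOn (S.indicator fun _ => κ * M) (Set.Ioc α β) :=
    (integrable continuousOn_const).indicator hS
  have h_layer : ∫ y in Set.Ioc α β, S.indicator (fun _ => κ * M) y =
      κ * M * volume.real {y ∈ Set.Ioc α β | ρ y < κ} := by
    rw [setIntegral_indicator hS, setIntegral_const, smul_eq_mul, mul_comm]
    rfl
  rw [intervalIntegral.integral_of_le h, intervalIntegral.integral_of_le h, ← h_layer,
    ← integral_const_mul, ← integral_add (integrable (by fun_prop)) h_indicator]
  refine setIntegral_mono_on (integrable (by fun_prop))
    ((integrable (by fun_prop)).add h_indicator) measurableSet_Ioc fun y hy => ?_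
  have hy' := Set.Ioc_subset_Icc_self hy
  by_cases hyS : y ∈ S
  · rw [Set.indicator_of_mem hyS]
    exact (mul_le_mul_of_nonneg_left (hM y hy') hκ).trans
      (le_add_of_nonneg_left (mul_nonneg (hρ₀ y hy') (hg₀ y hy')))
  · rw [Set.indicator_of_notMem hyS, add_zero]
    exact mul_le_mul_of_nonneg_right (not_lt.1 hyS) (hg₀ y hy')

lemma mul_abs_sub_le_abs_sq_sub_sq (hb : 0 ≤ b) (y : ℝ) :
    b * min |y - b| |y + b| ≤ |b ^ 2 - y ^ 2| := by
  rw [show b ^ 2 - y ^ 2 = -((y - b) * (y + b)) by ring, abs_neg, abs_mul]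
  rcases le_total 0 y with hy | hy
  · rw [mul_comm]
    exact mul_le_mul (min_le_left _ _) (by linarith [le_abs_self (y + b)]) hb (abs_nonneg _)
  · exact mul_le_mul (by linarith [neg_abs_le (y - b)]) (min_le_right _ _)
      (le_min (abs_nonneg _) (abs_nonneg _)) (abs_nonneg _)

lemma volume_real_critical_layer_le (hb : 0 < b) (hκ : 0 ≤ κ) (α β : ℝ) :
    volume.real {y ∈ Set.Ioc α β | |b ^ 2 - y ^ 2| < κ} ≤ 4 * (κ / b) := by
  have h_subset : {y ∈ Set.Ioc α β | |b ^ 2 - y ^ 2| < κ} ⊆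
      Metric.ball b (κ / b) ∪ Metric.ball (-b) (κ / b) := by
    rintro y ⟨-, hy⟩
    have h_min := (mul_abs_sub_le_abs_sq_sub_sq hb.le y).trans_lt hy
    rw [mul_comm, ← lt_div_iff₀ hb, min_lt_iff] at h_min
    simpa [Real.dist_eq] using h_min
  have h_ball (x : ℝ) : volume.real (Metric.ball x (κ / b)) = 2 * (κ / b) :=
    Real.volume_real_ball (by positivity)
  calc volume.real {y ∈ Set.Ioc α β | |b ^ 2 - y ^ 2| < κ}
      ≤ volume.real (Metric.ball b (κ / b) ∪ Metric.ball (-b) (κ / b)) :=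
        measureReal_mono h_subset
          (Metric.isBounded_ball.union Metric.isBounded_ball).measure_lt_top.ne
    _ ≤ volume.real (Metric.ball b (κ / b)) + volume.real (Metric.ball (-b) (κ / b)) :=
        measureReal_union_le _ _
    _ = 4 * (κ / b) := by rw [h_ball, h_ball]; ring

end WeightedInequalities

/-- The conclusion of the resolvent estimate for the normalized problem, in terms of
`σ = (ν / |k₁|)^{1/4}`. The `L¹` part is squared to avoid the exponent `3/2`. -/
def ResolventBound (C σ : ℝ) (w f : ℝ → ℂ) : Prop :=
  σ ^ 2 * l2 w ≤ C * l2 f ∧ σ ^ 3 * l1 w ^ 2 ≤ (C * l2 f) ^ 2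

lemma ResolventBound.mono {C C' σ : ℝ} {w f : ℝ → ℂ} (h : ResolventBound C σ w f) (hC : 0 ≤ C)
    (hCC' : C ≤ C') : ResolventBound C' σ w f := by
  have hf := l2_nonneg f
  have h_le : C * l2 f ≤ C' * l2 f := by gcongr
  exact ⟨h.1.trans h_le, h.2.trans (by gcongr)⟩

namespace SlipProblem

variable {ε K a s σ b θ : ℝ} {w φ f : ℝ → ℂ}

lemma sq_norm_le_l2_mul_l2_deriv (H : SlipProblem ε K a s w φ f) {y : ℝ}
    (hy : y ∈ Set.Icc (-1 : ℝ) 1) : ‖w y‖ ^ 2 ≤ 2 * (l2 w * l2 (deriv w)) := by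
  have h_ftc := sq_norm_le_add_integral (H.contDiff.of_le one_le_two) hy
    (Set.left_mem_Icc.2 (by norm_num))
  have h_cs := integral_norm_mul_norm_le_l2_mul_l2 le_rfl (by norm_num) le_rfl
    H.continuous.continuousOn H.continuous_deriv.continuousOn
  simp only [H.left, norm_zero, ne_eq, two_ne_zero, not_false_eq_true, zero_pow] at h_ftc
  linarith

lemma mul_sq_l2_le (H : SlipProblem ε K a s w φ f) (hb : 0 < b) (hθ : 0 ≤ θ) :
    b * θ * l2 w ^ 2 ≤ (∫ y in (-1 : ℝ)..1, |b ^ 2 - y ^ 2| * ‖w y‖ ^ 2) +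
      8 * (b * θ ^ 2) * (l2 w * l2 (deriv w)) := by
  have hw := H.continuous
  have h_layer := mul_integral_le_integral_mul_add_volume (α := -1) (β := 1) (by norm_num)
    (ρ := fun y => |b ^ 2 - y ^ 2|) (g := fun y => ‖w y‖ ^ 2) (by fun_prop) (by fun_prop)
    (fun _ _ => abs_nonneg _) (fun _ _ => sq_nonneg _)
    (fun y hy => H.sq_norm_le_l2_mul_l2_deriv hy) (mul_nonneg hb.le hθ)
  have h_volume := volume_real_critical_layer_le hb (mul_nonneg hb.le hθ) (-1) 1
  rw [mul_div_cancel_left₀ θ hb.ne'] at h_volume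
  have h_coeff : 0 ≤ b * θ * (2 * (l2 w * l2 (deriv w))) :=
    mul_nonneg (mul_nonneg hb.le hθ)
      (mul_nonneg zero_le_two (mul_nonneg (l2_nonneg w) (l2_nonneg (deriv w))))
  rw [sq_l2 w]
  linarith [mul_le_mul_of_nonneg_left h_volume h_coeff]

lemma resolventBound_of_one_le (H : SlipProblem (σ ^ 4) K a s w φ f) (hσ : 1 ≤ σ) :
    ResolventBound 2 σ w f := by
  have hw := l2_nonneg w
  have h_l2 : σ ^ 2 * l2 w ≤ l2 f :=
    calc σ ^ 2 * l2 w ≤ σ ^ 4 * K ^ 2 * l2 w := by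
          gcongr
          exact (pow_le_pow_right₀ hσ (by norm_num)).trans
            (le_mul_of_one_le_right (by positivity) (one_le_pow₀ H.one_le_wavenumber))
      _ ≤ l2 f := H.mul_sq_wavenumber_mul_l2_le
  refine ⟨by linarith [l2_nonneg f], ?_⟩
  calc σ ^ 3 * l1 w ^ 2 ≤ σ ^ 4 * (2 * l2 w ^ 2) :=
        mul_le_mul (pow_le_pow_right₀ hσ (by norm_num)) (sq_l1_le H.continuous.continuousOn)
          (sq_nonneg _) (by positivity)
    _ = 2 * (σ ^ 2 * l2 w) ^ 2 := by ring
    _ ≤ 2 * l2 f ^ 2 := by gcongr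
    _ ≤ (2 * l2 f) ^ 2 := by linarith [sq_nonneg (l2 f)]

lemma integral_sq_mul_sq_norm_le (H : SlipProblem ε K a s w φ f) :
    ∫ y in (-1 : ℝ)..1, y ^ 2 * ‖w y‖ ^ 2 ≤ a * l2 w ^ 2 + l2 f * l2 w := by
  have hw := H.continuous
  have h_energy := helmholtzEnergy_nonneg (K := K) (p := φ) (show (-1 : ℝ) ≤ 1 by norm_num)
  have h_form := neg_le_of_abs_le H.abs_rayleighForm_le
  simp only [rayleighForm, shearForm, sub_mul] at h_form
  rw [intervalIntegral.integral_sub (Continuous.intervalIntegrable (by fun_prop) _ _)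
    (Continuous.intervalIntegrable (by fun_prop) _ _), intervalIntegral.integral_const_mul,
    ← sq_l2] at h_form
  linarith

lemma sq_mul_l2_le_of_le {Γ : ℝ} (hΓ : 0 ≤ Γ) (H : SlipProblem (σ ^ 4) K a s w φ f)
    (ha : a ≤ Γ * σ ^ 2) : σ ^ 2 * l2 w ≤ (4 * Γ + 2) * l2 f := by
  have hw := l2_nonneg w
  have hf := l2_nonneg f
  have h_uncertainty := sq_integral_sq_norm_le_mul_integral_sq_deriv (by norm_num)
    (H.contDiff.of_le one_le_two) H.left H.right
  rw [← sq_l2, ← sq_l2] at h_uncertainty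
  set x := σ ^ 2 * l2 w with hx
  have h_quartic : x ^ 2 * x ^ 2 ≤ x ^ 2 * (4 * Γ * l2 f * x + 4 * l2 f ^ 2) :=
    calc x ^ 2 * x ^ 2 = σ ^ 8 * (l2 w ^ 2) ^ 2 := by rw [hx]; ring
      _ ≤ σ ^ 8 * (4 * ((Γ * σ ^ 2 * l2 w ^ 2 + l2 f * l2 w) * l2 (deriv w) ^ 2)) := by
        gcongr
        refine h_uncertainty.trans ?_
        gcongr
        exact H.integral_sq_mul_sq_norm_le.trans (by gcongr)
      _ = 4 * σ ^ 4 * ((Γ * σ ^ 2 * l2 w ^ 2 + l2 f * l2 w) * (σ ^ 4 * l2 (deriv w) ^ 2)) := by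
        ring
      _ ≤ 4 * σ ^ 4 * ((Γ * σ ^ 2 * l2 w ^ 2 + l2 f * l2 w) * (l2 f * l2 w)) := by
        gcongr 4 * σ ^ 4 * (_ * ?_)
        exact H.mul_sq_l2_deriv_le
      _ = _ := by rw [hx]; ring
  by_contra! h_lt
  have hx_pos : 0 < x := lt_of_le_of_lt (by positivity) h_lt
  have := le_of_mul_le_mul_left h_quartic (by positivity)
  nlinarith [mul_nonneg hΓ hf]

lemma resolventBound_of_le {Γ : ℝ} (hΓ : 0 ≤ Γ) (hσ : 0 < σ)
    (H : SlipProblem (σ ^ 4) K a s w φ f) (ha : a ≤ Γ * σ ^ 2) :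
    ResolventBound (8 * (Γ + 1) ^ 2) σ w f := by
  have hw := l2_nonneg w
  have hf := l2_nonneg f
  have h_l1 := mul_sq_integral_norm_le (α := -1) (β := 1) hσ (by norm_num)
    H.continuous.continuousOn
  rw [← sq_l2] at h_l1
  have h_l2 := H.sq_mul_l2_le_of_le hΓ ha
  refine ⟨h_l2.trans (by gcongr; nlinarith), ?_⟩
  calc σ ^ 3 * l1 w ^ 2 = σ ^ 2 * (σ * l1 w ^ 2) := by ring
    _ ≤ σ ^ 2 * (4 * (σ ^ 2 * l2 w ^ 2 + (Γ * σ ^ 2 * l2 w ^ 2 + l2 f * l2 w))) := by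
      gcongr σ ^ 2 * ?_
      refine h_l1.trans ?_
      gcongr
      exact H.integral_sq_mul_sq_norm_le.trans (by gcongr)
    _ = 4 * (Γ + 1) * (σ ^ 2 * l2 w) ^ 2 + 4 * l2 f * (σ ^ 2 * l2 w) := by ring
    _ ≤ 4 * (Γ + 1) * ((4 * Γ + 2) * l2 f) ^ 2 + 4 * l2 f * ((4 * Γ + 2) * l2 f) := by gcongr
    _ = (4 * (Γ + 1) * (4 * Γ + 2) ^ 2 + 4 * (4 * Γ + 2)) * l2 f ^ 2 := by ring
    _ ≤ (8 * (Γ + 1) ^ 2) ^ 2 * l2 f ^ 2 := by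
      gcongr
      nlinarith [pow_nonneg hΓ 3, pow_nonneg hΓ 4, sq_nonneg Γ]
    _ = _ := by ring

lemma shearForm_le_of_one_lt (H : SlipProblem ε K a s w φ f) (ha : 1 < a) :
    shearForm a (-1) 1 w ≤ 288 * (l2 f * l2 w) := by
  have hK := one_le_pow₀ H.one_le_wavenumber (n := 2)
  refine (H.stream.shearForm_le_mul_rayleighForm (by norm_num) (one_pos.trans ha)
    (fun y hy => ?_) (by nlinarith)).trans ?_
  · exact ((sq_le_one_iff_abs_le_one y).2 (abs_le.2 hy)).trans_lt ha
  · gcongr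
    exact le_of_abs_le H.abs_rayleighForm_le

-- The powers of `τ` come from layers of width `τ ^ 3`, for which both error terms balance.
lemma cube_mul_l2_le_of_one_lt {τ : ℝ} (hτ : 0 < τ) (hτ₁ : τ < 1)
    (H : SlipProblem (τ ^ 8) K a s w φ f) (ha : 1 < a) : τ ^ 3 * l2 w ≤ 640 * l2 f := by
  have hw := l2_nonneg w
  have hf := l2_nonneg f
  have hw₀ := H.continuous
  have h_shear : ∫ y in (-1 : ℝ)..1, |1 ^ 2 - y ^ 2| * ‖w y‖ ^ 2 ≤ shearForm a (-1) 1 w := by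
    refine integral_mono_of_continuousOn (by norm_num) (by fun_prop) (by fun_prop) fun y hy => ?_
    have : y ^ 2 ≤ 1 := (sq_le_one_iff_abs_le_one y).2 (abs_le.2 hy)
    rw [abs_of_nonneg (by linarith)]
    gcongr
    linarith
  have h_layer := (H.mul_sq_l2_le one_pos (pow_nonneg hτ.le 3)).trans
    (add_le_add_left (h_shear.trans (H.shearForm_le_of_one_lt ha)) _)
  set x := τ ^ 3 * l2 w with hx
  set x' := τ ^ 6 * l2 (deriv w) with hx'
  have h_x : x * x ≤ x * (288 * l2 f + 8 * x') :=
    calc x * x = τ ^ 3 * (1 * τ ^ 3 * l2 w ^ 2) := by rw [hx]; ring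
      _ ≤ τ ^ 3 * (288 * (l2 f * l2 w) + 8 * (1 * (τ ^ 3) ^ 2) * (l2 w * l2 (deriv w))) :=
        mul_le_mul_of_nonneg_left h_layer (by positivity)
      _ = _ := by rw [hx, hx']; ring
  have h_x' : x' ^ 2 ≤ l2 f * x :=
    calc x' ^ 2 = τ ^ 4 * (τ ^ 8 * l2 (deriv w) ^ 2) := by rw [hx']; ring
      _ ≤ τ ^ 4 * (l2 f * l2 w) := mul_le_mul_of_nonneg_left H.mul_sq_l2_deriv_le (by positivity)
      _ ≤ τ ^ 3 * (l2 f * l2 w) := by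
        gcongr ?_ * _
        exact pow_le_pow_of_le_one hτ.le hτ₁.le (by norm_num)
      _ = _ := by rw [hx]; ring
  by_contra! h_lt
  have := le_of_mul_le_mul_left h_x (lt_of_le_of_lt (by positivity) h_lt)
  nlinarith [sq_nonneg (x' - x / 16)]

lemma resolventBound_of_one_lt (hσ : 0 < σ) (hσ₁ : σ < 1)
    (H : SlipProblem (σ ^ 4) K a s w φ f) (ha : 1 < a) : ResolventBound 1280 σ w f := by
  obtain ⟨τ, hτ, rfl⟩ : ∃ τ : ℝ, 0 < τ ∧ σ = τ ^ 2 :=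
    ⟨√σ, sqrt_pos.2 hσ, (sq_sqrt hσ.le).symm⟩
  have hτ₁ : τ < 1 := by nlinarith
  have hw := l2_nonneg w
  have hf := l2_nonneg f
  rw [← pow_mul] at H
  have h_l2 := H.cube_mul_l2_le_of_one_lt hτ hτ₁ ha
  constructor
  · calc (τ ^ 2) ^ 2 * l2 w = τ * (τ ^ 3 * l2 w) := by ring
      _ ≤ 1 * (τ ^ 3 * l2 w) := by gcongr
      _ ≤ _ := by linarith
  · calc (τ ^ 2) ^ 3 * l1 w ^ 2 ≤ (τ ^ 2) ^ 3 * (2 * l2 w ^ 2) := by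
          gcongr
          exact sq_l1_le H.continuous.continuousOn
      _ = 2 * (τ ^ 3 * l2 w) ^ 2 := by ring
      _ ≤ 2 * (640 * l2 f) ^ 2 := by gcongr
      _ ≤ _ := by linarith [sq_nonneg (l2 f)]

end SlipProblem

section Averaging

variable {E : Type*} [NormedAddCommGroup E] [NormedSpace ℝ E] {K α β γ δ y z V M : ℝ}
  {p w v : ℝ → E}

lemma sq_norm_sub_le_mul_helmholtzEnergy [CompleteSpace E] (hp : ContDiff ℝ 1 p) (h₁ : α ≤ γ)
    (h₂ : δ ≤ β) (hy : y ∈ Set.Icc γ δ) (hz : z ∈ Set.Icc γ δ) :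
    ‖p y - p z‖ ^ 2 ≤ (δ - γ) * helmholtzEnergy K α β p := by
  have hp₀ := hp.continuous
  have h : γ ≤ δ := hy.1.trans hy.2
  refine (sq_norm_sub_le_mul_integral hp hy hz).trans
    (mul_le_mul_of_nonneg_left ?_ (sub_nonneg.2 h))
  calc ∫ t in γ..δ, ‖deriv p t‖ ^ 2
      ≤ ∫ t in γ..δ, (‖deriv p t‖ ^ 2 + K ^ 2 * ‖p t‖ ^ 2) :=
        integral_mono_of_continuousOn h (by fun_prop) (by fun_prop) fun t _ =>
          le_add_of_nonneg_right (by positivity)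
    _ ≤ helmholtzEnergy K α β p :=
        integral_le_integral_of_subinterval h₁ h h₂ (by fun_prop) fun t _ => by positivity

lemma mul_norm_le_norm_integral_add [CompleteSpace E] (h : α ≤ β)
    (hv : ContinuousOn v (Set.Icc α β)) (hV : ∀ t ∈ Set.Icc α β, ‖v y - v t‖ ≤ V) :
    (β - α) * ‖v y‖ ≤ ‖∫ t in α..β, v t‖ + (β - α) * V := by
  have h_osc : ‖∫ t in α..β, (v y - v t)‖ ≤ V * |β - α| :=
    intervalIntegral.norm_integral_le_of_norm_le_const fun t ht =>
      hV t (Set.Ioc_subset_Icc_self (Set.uIoc_of_le h ▸ ht))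
  rw [intervalIntegral.integral_sub intervalIntegrable_const (hv.intervalIntegrable_of_Icc h),
    intervalIntegral.integral_const, abs_of_nonneg (sub_nonneg.2 h)] at h_osc
  have h_triangle := norm_sub_norm_le ((β - α) • v y) (∫ t in α..β, v t)
  rw [norm_smul_of_nonneg (sub_nonneg.2 h)] at h_triangle
  linarith

lemma mul_norm_deriv_le [CompleteSpace E] (hp : ContDiff ℝ 2 p) (hz : z ∈ Set.Icc α β) :
    (β - α) * ‖deriv p z‖ ≤ ‖p β - p α‖ + (β - α) * ∫ t in α..β, ‖deriv (deriv p) t‖ := by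
  have hp' : ContDiff ℝ 1 (deriv p) := hp.deriv'
  have hp'' := hp'.continuous_deriv_one
  rw [← intervalIntegral.integral_deriv_eq_sub (fun t _ => hp.differentiable two_ne_zero t)
    (hp'.continuous.intervalIntegrable _ _)]
  refine mul_norm_le_norm_integral_add (hz.1.trans hz.2) hp'.continuous.continuousOn fun t ht => ?_
  rw [← intervalIntegral.integral_deriv_eq_sub (fun t _ => hp'.differentiable_one t)
    (hp''.intervalIntegrable _ _)]
  exact norm_integral_le_integral_norm_of_mem_Icc hp''.continuousOn hz ht

lemma HelmholtzOn.mul_norm_deriv_le_of_norm_le [CompleteSpace E] (hp : HelmholtzOn K α β p w)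
    (hK : 0 ≤ K) (hKβ : K * (β - α) ≤ 1 / 4) (hM : ∀ t ∈ Set.Icc α β, ‖p t‖ ≤ M)
    (hz : z ∈ Set.Icc α β) :
    (β - α) * ‖deriv p z‖ ≤ 3 * M + (β - α) * ∫ t in α..β, ‖w t‖ := by
  have h : α ≤ β := hz.1.trans hz.2
  have h₀ : 0 ≤ β - α := sub_nonneg.2 h
  have hp'' := hp.continuous_deriv_deriv
  have hw := hp.continuousOn_rhs
  have hM₀ : 0 ≤ M := (norm_nonneg _).trans (hM z hz)
  have h_increment : ‖p β - p α‖ ≤ 2 * M :=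
    (norm_sub_le _ _).trans (by linarith [hM α ⟨le_rfl, h⟩, hM β ⟨h, le_rfl⟩])
  have h_second : ∫ t in α..β, ‖deriv (deriv p) t‖ ≤
      (∫ t in α..β, ‖w t‖) + (β - α) * (K ^ 2 * M) := by
    rw [← smul_eq_mul (β - α), ← intervalIntegral.integral_const,
      ← intervalIntegral.integral_add (hw.norm.intervalIntegrable_of_Icc h)
        intervalIntegrable_const]
    refine integral_mono_of_continuousOn h (by fun_prop) (by fun_prop) fun t ht => ?_
    rw [← hp.eqn t ht]
    calc ‖deriv (deriv p) t‖
        ≤ ‖deriv (deriv p) t - K ^ 2 • p t‖ + ‖K ^ 2 • p t‖ := norm_le_norm_sub_add _ _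
      _ ≤ ‖deriv (deriv p) t - K ^ 2 • p t‖ + K ^ 2 * M := by
          rw [norm_smul_of_nonneg (sq_nonneg K)]
          gcongr
          exact hM t ht
  have h_wavenumber : (K * (β - α)) ^ 2 * M ≤ M :=
    mul_le_of_le_one_left hM₀ (pow_le_one₀ (by positivity) (by linarith))
  linarith [mul_norm_deriv_le hp.contDiff hz, mul_le_mul_of_nonneg_left h_second h₀]

end Averaging

namespace SlipProblem

variable {ε K a s α β κ : ℝ} {w φ f : ℝ → ℂ}

lemma I_smul_integral_stream_eq (H : SlipProblem ε K a s w φ f) (h₁ : -1 ≤ α) (h₂ : α ≤ β)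
    (h₃ : β ≤ 1) :
    Complex.I * (s • ((2 : ℝ) • ∫ y in α..β, φ y)) =
      (∫ y in α..β, f y) + ε • (deriv w β - deriv w α) -
        ∫ y in α..β, ((ε * K ^ 2) • w y + Complex.I * (s • ((a - y ^ 2) • w y))) := by
  have hw := H.continuous
  have hw'' := H.continuous_deriv_deriv
  have hf : IntervalIntegrable f volume α β :=
    (H.continuousOn_forcing.mono (Set.Icc_subset_Icc h₁ h₃)).intervalIntegrable_of_Icc h₂
  have integrable {g : ℝ → ℂ} (hg : Continuous g) : IntervalIntegrable g volume α β :=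
    hg.intervalIntegrable _ _
  rw [← intervalIntegral.integral_deriv_eq_sub
      (fun t _ => H.contDiff_deriv.differentiable_one t) (integrable hw''),
    ← intervalIntegral.integral_smul, ← intervalIntegral.integral_smul,
    ← intervalIntegral.integral_smul, ← intervalIntegral.integral_const_mul,
    ← intervalIntegral.integral_add hf (integrable (by fun_prop)),
    ← intervalIntegral.integral_sub (hf.add (integrable (by fun_prop)))
      (integrable (by fun_prop))]
  refine intervalIntegral.integral_congr fun y hy => ?_
  rw [Set.uIcc_of_le h₂] at hy
  simp only [H.eqn y ⟨h₁.trans hy.1, hy.2.trans h₃⟩, Complex.real_smul]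
  push_cast
  ring

lemma two_mul_norm_integral_stream_le (H : SlipProblem ε K a s w φ f) (h₁ : -1 ≤ α)
    (h₂ : α ≤ β) (h₃ : β ≤ 1) (hκ : ∀ y ∈ Set.Icc α β, |a - y ^ 2| ≤ κ) :
    2 * ‖∫ y in α..β, φ y‖ ≤ (∫ y in α..β, ‖f y‖) + ε * (‖deriv w α‖ + ‖deriv w β‖) +
      (ε * K ^ 2 + κ) * ∫ y in α..β, ‖w y‖ := by
  have hw := H.continuous
  have hε := H.viscosity_pos
  set R := fun y => (ε * K ^ 2) • w y + Complex.I * (s • ((a - y ^ 2) • w y))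
  have h_rest : ‖∫ y in α..β, R y‖ ≤ (ε * K ^ 2 + κ) * ∫ y in α..β, ‖w y‖ := by
    rw [← intervalIntegral.integral_const_mul]
    refine (intervalIntegral.norm_integral_le_integral_norm h₂).trans
      (integral_mono_of_continuousOn h₂ (by fun_prop) (by fun_prop) fun y hy => ?_)
    refine (norm_add_le _ _).trans ?_
    rw [norm_smul_of_nonneg (by positivity), norm_mul, Complex.norm_I, norm_smul, norm_smul,
      norm_eq_abs, norm_eq_abs, H.abs_sign, one_mul, one_mul, add_mul]
    gcongr
    exact hκ y hy
  calc 2 * ‖∫ y in α..β, φ y‖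
      = ‖Complex.I * (s • ((2 : ℝ) • ∫ y in α..β, φ y))‖ := by
        rw [norm_mul, norm_smul, norm_smul, norm_eq_abs s, H.abs_sign]
        simp
    _ ≤ ‖∫ y in α..β, f y‖ + ‖ε • (deriv w β - deriv w α)‖ + ‖∫ y in α..β, R y‖ := by
        rw [H.I_smul_integral_stream_eq h₁ h₂ h₃]
        exact (norm_sub_le _ _).trans (by gcongr; exact norm_add_le _ _)
    _ ≤ _ := by
        rw [norm_smul_of_nonneg hε.le]
        gcongr
        · exact intervalIntegral.norm_integral_le_integral_norm h₂
        · exact (norm_sub_le _ _).trans_eq (add_comm _ _)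

lemma exists_mul_sq_norm_deriv_le (H : SlipProblem ε K a s w φ f) (h₁ : -1 ≤ α) (h₂ : α < β)
    (h₃ : β ≤ 1) : ∃ c ∈ Set.Icc α β, (β - α) * ‖deriv w c‖ ^ 2 ≤ l2 (deriv w) ^ 2 := by
  have hw' := H.continuous_deriv
  obtain ⟨c, hc, h⟩ := exists_mul_sub_le_integral (g := fun y => ‖deriv w y‖ ^ 2) h₂
    (by fun_prop)
  exact ⟨c, hc, (mul_comm _ _).trans_le
    (h.trans (integral_sq_norm_le_sq_l2 h₁ h₂.le h₃ hw'.continuousOn))⟩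

lemma sq_two_mul_norm_integral_stream_le (H : SlipProblem ε K a s w φ f) (h₁ : -1 ≤ α)
    (h₂ : α ≤ β) (h₃ : β ≤ 1) (hκ : ∀ y ∈ Set.Icc α β, |a - y ^ 2| ≤ κ) :
    (2 * ‖∫ y in α..β, φ y‖) ^ 2 ≤ 3 * (β - α) * (4 * l2 f ^ 2 + κ ^ 2 * l2 w ^ 2) +
      6 * ε ^ 2 * (‖deriv w α‖ ^ 2 + ‖deriv w β‖ ^ 2) := by
  have hε := H.viscosity_pos
  have h := H.two_mul_norm_integral_stream_le h₁ h₂ h₃ hκ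
  have h_forcing := sq_integral_norm_le_mul_sq_l2 h₁ h₂ h₃ H.continuousOn_forcing
  have h_vorticity := sq_integral_norm_le_mul_sq_l2 h₁ h₂ h₃ H.continuous.continuousOn
  have h_diffusion : (ε * K ^ 2 * ∫ y in α..β, ‖w y‖) ^ 2 ≤ (β - α) * l2 f ^ 2 :=
    calc (ε * K ^ 2 * ∫ y in α..β, ‖w y‖) ^ 2
        ≤ (ε * K ^ 2) ^ 2 * ((β - α) * l2 w ^ 2) := by rw [mul_pow]; gcongr
      _ = (β - α) * (ε * K ^ 2 * l2 w) ^ 2 := by ring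
      _ ≤ (β - α) * l2 f ^ 2 := by
          have := sub_nonneg.2 h₂
          have := l2_nonneg w
          gcongr
          exact H.mul_sq_wavenumber_mul_l2_le
  generalize (∫ y in α..β, ‖f y‖) = F, (∫ y in α..β, ‖w y‖) = W at *
  have h_sq : (2 * ‖∫ y in α..β, φ y‖) ^ 2 ≤
      6 * (F ^ 2 + (ε * K ^ 2 * W) ^ 2) + 3 * κ ^ 2 * W ^ 2 +
        6 * ε ^ 2 * (‖deriv w α‖ ^ 2 + ‖deriv w β‖ ^ 2) := by
    refine (pow_le_pow_left₀ (by positivity) h 2).trans ?_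
    nlinarith [sq_nonneg (F - ε * K ^ 2 * W), sq_nonneg (F + ε * K ^ 2 * W - κ * W),
      sq_nonneg (F + ε * K ^ 2 * W - ε * (‖deriv w α‖ + ‖deriv w β‖)),
      sq_nonneg (κ * W - ε * (‖deriv w α‖ + ‖deriv w β‖)),
      mul_nonneg (sq_nonneg ε) (sq_nonneg (‖deriv w α‖ - ‖deriv w β‖))]
  linarith [mul_le_mul_of_nonneg_left h_vorticity (sq_nonneg κ)]

lemma exists_mul_sq_norm_integral_stream_le (H : SlipProblem ε K a s w φ f) (h₁ : -1 ≤ α)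
    (h₂ : α < β) (h₃ : β ≤ 1) (hκ : ∀ y ∈ Set.Icc α β, |a - y ^ 2| ≤ κ) :
    ∃ c d, α ≤ c ∧ d ≤ β ∧ β - α ≤ 3 * (d - c) ∧
      (β - α) * (2 * ‖∫ y in c..d, φ y‖) ^ 2 ≤
        3 * (β - α) ^ 2 * (4 * l2 f ^ 2 + κ ^ 2 * l2 w ^ 2) + 36 * (ε * l2 (deriv w)) ^ 2 := by
  obtain ⟨c, hc, hc'⟩ := H.exists_mul_sq_norm_deriv_le (α := α) (β := α + (β - α) / 3) h₁
    (by linarith) (by linarith)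
  obtain ⟨d, hd, hd'⟩ := H.exists_mul_sq_norm_deriv_le (α := β - (β - α) / 3) (β := β)
    (by linarith) (by linarith) h₃
  have h₀ := sub_nonneg.2 h₂.le
  have h := H.sq_two_mul_norm_integral_stream_le (h₁.trans hc.1) (by linarith [hc.2, hd.1])
    (hd.2.trans h₃) fun y hy => hκ y ⟨hc.1.trans hy.1, hy.2.trans hd.2⟩
  refine ⟨c, d, hc.1, hd.2, by linarith [hc.2, hd.1], ?_⟩
  calc (β - α) * (2 * ‖∫ y in c..d, φ y‖) ^ 2
      ≤ (β - α) * (3 * (β - α) * (4 * l2 f ^ 2 + κ ^ 2 * l2 w ^ 2) +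
          6 * ε ^ 2 * (‖deriv w c‖ ^ 2 + ‖deriv w d‖ ^ 2)) := by
        refine mul_le_mul_of_nonneg_left (h.trans ?_) h₀
        gcongr
        exacts [hd.2, hc.1]
    _ ≤ _ := by
        linarith [mul_le_mul_of_nonneg_left hc' (sq_nonneg ε),
          mul_le_mul_of_nonneg_left hd' (sq_nonneg ε)]

lemma cube_mul_sq_norm_stream_le (H : SlipProblem ε K a s w φ f) (h₁ : -1 ≤ α) (h₂ : α < β)
    (h₃ : β ≤ 1) (hκ : ∀ y ∈ Set.Icc α β, |a - y ^ 2| ≤ κ) {y : ℝ} (hy : y ∈ Set.Icc α β) :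
    (β - α) ^ 3 * ‖φ y‖ ^ 2 ≤ 54 * (β - α) ^ 2 * l2 f ^ 2 +
      14 * (β - α) ^ 2 * κ ^ 2 * l2 w ^ 2 + 162 * (ε * l2 (deriv w)) ^ 2 +
      2 * (β - α) ^ 4 * helmholtzEnergy K (-1) 1 φ := by
  obtain ⟨c, d, hc, hd, h_length, h_mean⟩ :=
    H.exists_mul_sq_norm_integral_stream_le h₁ h₂ h₃ hκ
  have h₀ : 0 < β - α := sub_pos.2 h₂
  have hφ := H.stream.continuous
  set U := helmholtzEnergy K (-1) 1 φ
  have hU : 0 ≤ (β - α) * U := mul_nonneg h₀.le (helmholtzEnergy_nonneg (by norm_num))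
  have h_osc := mul_norm_le_norm_integral_add (y := y) (by linarith : c ≤ d) hφ.continuousOn
    fun t ht => Real.le_sqrt_of_sq_le (sq_norm_sub_le_mul_helmholtzEnergy (K := K)
      (H.stream.contDiff.of_le one_le_two) h₁ h₃ hy ⟨hc.trans ht.1, ht.2.trans hd⟩)
  have h_norm : (β - α) * ‖φ y‖ ≤ 3 * ‖∫ t in c..d, φ t‖ + (β - α) * √((β - α) * U) := by
    rcases le_total ‖φ y‖ √((β - α) * U) with h_le | h_le
    · exact (mul_le_mul_of_nonneg_left h_le h₀.le).trans
        (le_add_of_nonneg_left (by positivity))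
    · linarith [mul_le_mul_of_nonneg_right h_length (sub_nonneg.2 h_le)]
  calc (β - α) ^ 3 * ‖φ y‖ ^ 2 = (β - α) * ((β - α) * ‖φ y‖) ^ 2 := by ring
    _ ≤ (β - α) * (2 * ((3 * ‖∫ t in c..d, φ t‖) ^ 2 + ((β - α) * √((β - α) * U)) ^ 2)) := by
        gcongr
        exact (pow_le_pow_left₀ (by positivity) h_norm 2).trans add_sq_le
    _ = 9 / 2 * ((β - α) * (2 * ‖∫ t in c..d, φ t‖) ^ 2) +
          2 * (β - α) ^ 3 * √((β - α) * U) ^ 2 := by ring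
    _ ≤ _ := by
        rw [Real.sq_sqrt hU]
        have : 0 ≤ (β - α) ^ 2 * (κ ^ 2 * l2 w ^ 2) := by positivity
        linarith

end SlipProblem

section LogarithmicWeight

variable {b h α β : ℝ}

/-- The shear `|b² - y²|`, regularised at the width-`h` critical layers around `±b`. -/
def layerWeight (b h y : ℝ) : ℝ := |b ^ 2 - y ^ 2| + b * h

/-- The logarithmic loss: `layerLog b h / b` bounds the integral of `(layerWeight b h)⁻¹` over
`[-1, 1]`. -/
def layerLog (b h : ℝ) : ℝ := 6 * log (2 * b / h)

lemma continuous_layerWeight (b h : ℝ) : Continuous (layerWeight b h) := by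
  unfold layerWeight
  fun_prop

lemma layerWeight_pos (hb : 0 < b) (hh : 0 < h) (y : ℝ) : 0 < layerWeight b h y := by
  unfold layerWeight
  positivity

lemma one_le_layerLog (hh : 0 < h) (hhb : h ≤ b) : 1 ≤ layerLog b h := by
  have h_log : log 2 ≤ log (2 * b / h) :=
    log_le_log two_pos (by rw [le_div_iff₀ hh]; linarith)
  unfold layerLog
  linarith [log_two_gt_d9]

lemma integral_zero_inv_layerWeight_le (hh : 0 < h) (hhb : h ≤ b) :
    ∫ y in 0..b, (layerWeight b h y)⁻¹ ≤ b⁻¹ * log (2 * b / h) := by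
  have hb : 0 < b := hh.trans_le hhb
  have h_pos {y : ℝ} (hy : y ∈ Set.Icc 0 b) : 0 < b + h - y := by linarith [hy.2]
  calc ∫ y in 0..b, (layerWeight b h y)⁻¹
      ≤ ∫ y in 0..b, b⁻¹ * (b + h - y)⁻¹ := by
        refine integral_mono_of_continuousOn hb.le
          ((continuous_layerWeight b h).continuousOn.inv₀ fun y _ => (layerWeight_pos hb hh y).ne')
          (continuousOn_const.mul (ContinuousOn.inv₀ (by fun_prop) fun y hy => (h_pos hy).ne'))
          fun y hy => ?_
        rw [← mul_inv]
        refine inv_anti₀ (mul_pos hb (h_pos hy)) ?_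
        rw [layerWeight]
        nlinarith [le_abs_self (b ^ 2 - y ^ 2), mul_nonneg hy.1 (sub_nonneg.2 hy.2)]
    _ = b⁻¹ * log ((b + h) / h) := by
        rw [intervalIntegral.integral_const_mul,
          intervalIntegral.integral_comp_sub_left (fun y => y⁻¹) (b + h), add_sub_cancel_left,
          sub_zero, integral_inv_of_pos hh (by positivity)]
    _ ≤ b⁻¹ * log (2 * b / h) := by
        gcongr
        linarith

lemma inv_layerWeight_le {y : ℝ} (hh : 0 < h) (hhb : h ≤ b) (hy : b ≤ y) :
    (layerWeight b h y)⁻¹ ≤ 2 / b * ((y - (b - h))⁻¹ - (y + b)⁻¹) := by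
  have hb : 0 < b := hh.trans_le hhb
  have h_sub : 0 < y - (b - h) := by linarith
  have h_add : 0 < y + b := by linarith
  have h_weight : (y - (b - h)) * (y + b) ≤ 2 * (-(b ^ 2 - y ^ 2) + b * h) := by
    nlinarith [mul_nonneg (sub_nonneg.2 hy) (sub_nonneg.2 hhb),
      mul_nonneg (sub_nonneg.2 hy) h_add.le]
  rw [inv_sub_inv h_sub.ne' h_add.ne', div_mul_div_comm, inv_eq_one_div,
    div_le_div_iff₀ (layerWeight_pos hb hh y) (by positivity), layerWeight,
    abs_of_nonpos (by nlinarith)]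
  calc 1 * (b * ((y - (b - h)) * (y + b)))
      ≤ (y + b - (y - (b - h))) * (2 * (-(b ^ 2 - y ^ 2) + b * h)) := by
        rw [one_mul]
        exact mul_le_mul (by linarith) h_weight (by positivity) (by linarith)
    _ = _ := by ring

lemma integral_one_inv_layerWeight_le (hh : 0 < h) (hhb : h ≤ b) (hb₁ : b ≤ 1) :
    ∫ y in b..1, (layerWeight b h y)⁻¹ ≤ b⁻¹ * (2 * log (2 * b / h)) := by
  have hb : 0 < b := hh.trans_le hhb
  have h_sub {y : ℝ} (hy : y ∈ Set.Icc b 1) : 0 < y - (b - h) := by linarith [hy.1]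
  have h_add {y : ℝ} (hy : y ∈ Set.Icc b 1) : 0 < y + b := by linarith [hy.1]
  have h_sub_inv : ContinuousOn (fun y => (y - (b - h))⁻¹) (Set.Icc b 1) :=
    ContinuousOn.inv₀ (by fun_prop) fun y hy => (h_sub hy).ne'
  have h_add_inv : ContinuousOn (fun y => (y + b)⁻¹) (Set.Icc b 1) :=
    ContinuousOn.inv₀ (by fun_prop) fun y hy => (h_add hy).ne'
  calc ∫ y in b..1, (layerWeight b h y)⁻¹
      ≤ ∫ y in b..1, 2 / b * ((y - (b - h))⁻¹ - (y + b)⁻¹) := by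
        exact integral_mono_of_continuousOn hb₁
          ((continuous_layerWeight b h).continuousOn.inv₀ fun y _ => (layerWeight_pos hb hh y).ne')
          (continuousOn_const.mul (h_sub_inv.sub h_add_inv)) fun y hy =>
          inv_layerWeight_le hh hhb hy.1
    _ = 2 / b * (log ((1 - (b - h)) / h) - log ((1 + b) / (2 * b))) := by
        rw [intervalIntegral.integral_const_mul, intervalIntegral.integral_sub
          (h_sub_inv.intervalIntegrable_of_Icc hb₁) (h_add_inv.intervalIntegrable_of_Icc hb₁),
          intervalIntegral.integral_comp_sub_right (fun y => y⁻¹),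
          intervalIntegral.integral_comp_add_right (fun y => y⁻¹), integral_inv_of_pos,
          integral_inv_of_pos, sub_sub_cancel, two_mul]
        all_goals linarith
    _ ≤ b⁻¹ * (2 * log (2 * b / h)) := by
        rw [← log_div (div_pos (by linarith) hh).ne' (by positivity), ← mul_assoc,
          inv_mul_eq_div]
        refine mul_le_mul_of_nonneg_left (log_le_log (div_pos (div_pos (by linarith) hh)
          (by positivity)) ?_) (by positivity)
        rw [div_div_div_eq, div_le_div_iff₀ (by positivity) hh]
        nlinarith [mul_pos hb hh]

lemma integral_inv_layerWeight_le (hh : 0 < h) (hhb : h ≤ b) (hb₁ : b ≤ 1) :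
    ∫ y in -1..1, (layerWeight b h y)⁻¹ ≤ layerLog b h / b := by
  have hb : 0 < b := hh.trans_le hhb
  have h_cont : Continuous fun y => (layerWeight b h y)⁻¹ :=
    (continuous_layerWeight b h).inv₀ fun y => (layerWeight_pos hb hh y).ne'
  have h_even : ∫ y in -1..0, (layerWeight b h y)⁻¹ = ∫ y in 0..1, (layerWeight b h y)⁻¹ := by
    simpa [layerWeight] using
      (intervalIntegral.integral_comp_neg (a := 0) (b := 1) fun y => (layerWeight b h y)⁻¹).symm
  rw [integral_split_of_continuousOn (β := 0) (by norm_num) (by norm_num) h_cont.continuousOn,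
    h_even, integral_split_of_continuousOn hb.le hb₁ h_cont.continuousOn]
  calc _ ≤ 2 * (b⁻¹ * log (2 * b / h) + b⁻¹ * (2 * log (2 * b / h))) := by
        linarith [integral_zero_inv_layerWeight_le hh hhb,
          integral_one_inv_layerWeight_le hh hhb hb₁]
    _ = layerLog b h / b := by rw [layerLog]; ring

lemma sq_integral_norm_le_layerLog_mul {E : Type*} [NormedAddCommGroup E] {w : ℝ → E}
    (hh : 0 < h) (hhb : h ≤ b) (hb₁ : b ≤ 1) (h₁ : -1 ≤ α) (h₂ : α ≤ β) (h₃ : β ≤ 1)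
    (hw : ContinuousOn w (Set.Icc α β)) :
    (∫ y in α..β, ‖w y‖) ^ 2 ≤
      layerLog b h / b * ∫ y in α..β, layerWeight b h y * ‖w y‖ ^ 2 := by
  have hb : 0 < b := hh.trans_le hhb
  have h_pos := layerWeight_pos hb hh
  have h_cont := continuous_layerWeight b h
  refine (sq_integral_le_integral_inv_mul h₂ h_cont.continuousOn hw.norm fun y _ => h_pos y).trans
    (mul_le_mul_of_nonneg_right ?_ ?_)
  · exact (integral_le_integral_of_subinterval h₁ h₂ h₃
      (h_cont.inv₀ fun y => (h_pos y).ne').continuousOn fun y _ => (inv_pos.2 (h_pos y)).le).trans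
      (integral_inv_layerWeight_le hh hhb hb₁)
  · exact intervalIntegral.integral_nonneg h₂ fun y _ => mul_nonneg (h_pos y).le (sq_nonneg _)

end LogarithmicWeight

namespace SlipProblem

variable {ε K a s α β m : ℝ} {w φ f : ℝ → ℂ}

lemma exists_symmetric_cut (H : SlipProblem ε K a s w φ f) (h₁ : -1 ≤ α) (h₂ : α < β)
    (h₃ : β ≤ 1) :
    ∃ c ∈ Set.Icc α β, (β - α) *
      (‖deriv w (-c)‖ * ‖w (-c)‖ + ‖deriv w c‖ * ‖w c‖) ≤ 2 * (l2 (deriv w) * l2 w) := by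
  have hw := H.continuous
  have hw' := H.continuous_deriv
  obtain ⟨c, hc, h⟩ := exists_mul_sub_le_integral
    (g := fun y => ‖deriv w (-y)‖ * ‖w (-y)‖ + ‖deriv w y‖ * ‖w y‖) h₂ (by fun_prop)
  rw [intervalIntegral.integral_add (Continuous.intervalIntegrable (by fun_prop) _ _)
    (Continuous.intervalIntegrable (by fun_prop) _ _),
    intervalIntegral.integral_comp_neg fun y => ‖deriv w y‖ * ‖w y‖] at h
  refine ⟨c, hc, ?_⟩
  linarith [integral_norm_mul_norm_le_l2_mul_l2 h₁ h₂.le h₃ hw'.continuousOn hw.continuousOn,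
    integral_norm_mul_norm_le_l2_mul_l2 (neg_le_neg h₃) (neg_le_neg h₂.le) (neg_le.1 h₁)
      hw'.continuousOn hw.continuousOn]

lemma exists_dirichlet_abs_rayleighForm_le (H : SlipProblem ε K a s w φ f) (h₁ : -1 ≤ α)
    (h₂ : α < β) (h₃ : β ≤ 1) (hα : ‖φ α‖ ≤ m) (hβ : ‖φ β‖ ≤ m) :
    ∃ p, DirichletHelmholtzOn K α β p w ∧ (∀ y ∈ Set.Icc α β, ‖φ y - p y‖ ≤ m) ∧
      |rayleighForm a K α β w p| ≤ l2 f * l2 w +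
        ε * (‖deriv w α‖ * ‖w α‖ + ‖deriv w β‖ * ‖w β‖) + 2 * (m * l1 w) := by
  have h_sub := Set.Icc_subset_Icc h₁ h₃
  have hm : 0 ≤ m := (norm_nonneg _).trans hα
  obtain ⟨p, hp, hφp⟩ := (H.stream.toHelmholtzOn.mono h_sub).exists_dirichlet
    (zero_lt_one.trans_le H.one_le_wavenumber) h₂ hα hβ
  refine ⟨p, hp, hφp, ?_⟩
  have h_energy := hp.abs_integral_inner_add_energy_le h₂.le H.stream.continuous.continuousOn hφp
  have h_l1 : ∫ y in α..β, ‖w y‖ ≤ l1 w :=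
    integral_le_integral_of_subinterval h₁ h₂.le h₃ H.continuous.norm.continuousOn
      fun _ _ => norm_nonneg _
  calc |rayleighForm a K α β w p|
      = |(shearForm a α β w + 2 * ∫ y in α..β, inner ℝ (φ y) (w y)) -
          2 * ((∫ y in α..β, inner ℝ (φ y) (w y)) + helmholtzEnergy K α β p)| := by
        rw [rayleighForm]; ring_nf
    _ ≤ _ := by
        refine (abs_sub _ _).trans (add_le_add (H.abs_shearForm_add_le h₁ h₂.le h₃) ?_)
        rw [abs_mul, abs_two]
        gcongr
        exact h_energy.trans (by gcongr)

end SlipProblem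

/-- A slip problem with critical layers at `±b`, cut at the points `±c` lying on the inner side of
layers of width `h`. The stream function is at most `m` at the cuts, and `R` bounds all errors
committed by the energy identity on each of the three pieces. -/
structure CutProblem (ε K b h c m R s : ℝ) (w φ f : ℝ → ℂ) : Prop
    extends SlipProblem ε K (b ^ 2) s w φ f where
  width_pos : 0 < h
  four_mul_width_le : 4 * h ≤ b
  layer_le_one : b ≤ 1
  sub_width_le : b - h ≤ c
  cut_le : c ≤ b - h / 2
  norm_stream_left_le : ‖φ (-c)‖ ≤ m
  norm_stream_right_le : ‖φ c‖ ≤ m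
  error_le : l2 f * l2 w + ε * (‖deriv w (-c)‖ * ‖w (-c)‖ + ‖deriv w c‖ * ‖w c‖) +
    2 * (m * l1 w) + 4 * (b * h) * l2 w ^ 2 ≤ R

namespace CutProblem

variable {ε K b h c m R s α β γ δ z : ℝ} {w φ f p : ℝ → ℂ}

lemma width_le (P : CutProblem ε K b h c m R s w φ f) : h ≤ b := by
  linarith [P.width_pos, P.four_mul_width_le]

lemma layer_pos (P : CutProblem ε K b h c m R s w φ f) : 0 < b :=
  P.width_pos.trans_le P.width_le

lemma three_mul_le (P : CutProblem ε K b h c m R s w φ f) : 3 * b ≤ 4 * c := by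
  linarith [P.sub_width_le, P.four_mul_width_le]

lemma cut_pos (P : CutProblem ε K b h c m R s w φ f) : 0 < c := by
  linarith [P.layer_pos, P.three_mul_le]

lemma cut_lt_layer (P : CutProblem ε K b h c m R s w φ f) : c < b := by
  linarith [P.width_pos, P.cut_le]

lemma cut_lt_one (P : CutProblem ε K b h c m R s w φ f) : c < 1 :=
  P.cut_lt_layer.trans_le P.layer_le_one

lemma bound_nonneg (P : CutProblem ε K b h c m R s w φ f) : 0 ≤ m :=
  (norm_nonneg _).trans P.norm_stream_left_le

lemma sq_lt (P : CutProblem ε K b h c m R s w φ f) {y : ℝ} (hy : y ∈ Set.Icc (-c) c) :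
    y ^ 2 < b ^ 2 :=
  sq_lt_sq' (by linarith [hy.1, P.cut_lt_layer]) (hy.2.trans_lt P.cut_lt_layer)

lemma one_le_log (P : CutProblem ε K b h c m R s w φ f) : 1 ≤ layerLog b h :=
  one_le_layerLog P.width_pos P.width_le

lemma width_error_le (P : CutProblem ε K b h c m R s w φ f) :
    4 * (b * h) * l2 w ^ 2 ≤ R := by
  have := P.error_le
  have := P.viscosity_pos
  have := P.bound_nonneg
  have : 0 ≤ l2 f * l2 w := mul_nonneg (l2_nonneg f) (l2_nonneg w)
  have : 0 ≤ m * l1 w := mul_nonneg P.bound_nonneg (l1_nonneg w)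
  have : 0 ≤ ε * (‖deriv w (-c)‖ * ‖w (-c)‖ + ‖deriv w c‖ * ‖w c‖) := by positivity
  linarith

lemma error_nonneg (P : CutProblem ε K b h c m R s w φ f) : 0 ≤ R := by
  have := P.layer_pos
  have := P.width_pos
  exact le_trans (by positivity) P.width_error_le

lemma exists_inner_dirichlet (P : CutProblem ε K b h c m R s w φ f) :
    ∃ p, DirichletHelmholtzOn K (-c) c p w ∧ (∀ y ∈ Set.Icc (-c) c, ‖φ y - p y‖ ≤ m) ∧
      rayleighForm (b ^ 2) K (-c) c w p ≤ R := by
  obtain ⟨p, hp, hφp, h_form⟩ := P.exists_dirichlet_abs_rayleighForm_le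
    (neg_le_neg P.cut_lt_one.le) (neg_lt_self P.cut_pos) P.cut_lt_one.le P.norm_stream_left_le
    P.norm_stream_right_le
  have : 0 ≤ 4 * (b * h) * l2 w ^ 2 := by
    have := P.layer_pos
    have := P.width_pos
    positivity
  exact ⟨p, hp, hφp, (le_abs_self _).trans (h_form.trans (by linarith [P.error_le]))⟩

/-- An outer piece of a cut problem: an interval `[α, β]` outside `(-c, c)` at whose endpoints the
boundary terms are controlled by those at `±c`. -/
structure OuterPiece (c m : ℝ) (w φ : ℝ → ℂ) (α β : ℝ) : Prop where
  neg_one_le : -1 ≤ α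
  lt : α < β
  le_one : β ≤ 1
  le_abs : ∀ y ∈ Set.Icc α β, c ≤ |y|
  norm_left_le : ‖φ α‖ ≤ m
  norm_right_le : ‖φ β‖ ≤ m
  boundary_le : ‖deriv w α‖ * ‖w α‖ + ‖deriv w β‖ * ‖w β‖ ≤
    ‖deriv w (-c)‖ * ‖w (-c)‖ + ‖deriv w c‖ * ‖w c‖

lemma outerPiece_left (P : CutProblem ε K b h c m R s w φ f) :
    OuterPiece c m w φ (-1) (-c) where
  neg_one_le := le_rfl
  lt := neg_lt_neg P.cut_lt_one
  le_one := by linarith [P.cut_pos]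
  le_abs y hy := (le_neg.1 hy.2).trans (neg_le_abs y)
  norm_left_le := by simpa [P.stream.left] using P.bound_nonneg
  norm_right_le := P.norm_stream_left_le
  boundary_le := by
    rw [P.left, norm_zero, mul_zero, zero_add]
    exact le_add_of_nonneg_right (by positivity)

lemma outerPiece_right (P : CutProblem ε K b h c m R s w φ f) : OuterPiece c m w φ c 1 where
  neg_one_le := by linarith [P.cut_pos]
  lt := P.cut_lt_one
  le_one := le_rfl
  le_abs y hy := hy.1.trans (le_abs_self y)
  norm_left_le := P.norm_stream_right_le
  norm_right_le := by simpa [P.stream.right] using P.bound_nonneg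
  boundary_le := by
    rw [P.right, norm_zero, mul_zero, add_zero]
    exact le_add_of_nonneg_left (by positivity)

lemma exists_outer_dirichlet (P : CutProblem ε K b h c m R s w φ f)
    (O : OuterPiece c m w φ α β) :
    ∃ p, DirichletHelmholtzOn K α β p w ∧ (∀ y ∈ Set.Icc α β, ‖φ y - p y‖ ≤ m) ∧
      (∫ y in α..β, |b ^ 2 - y ^ 2| * ‖w y‖ ^ 2) + 2 * helmholtzEnergy K α β p ≤ R := by
  obtain ⟨p, hp, hφp, h_form⟩ := P.exists_dirichlet_abs_rayleighForm_le O.neg_one_le O.lt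
    O.le_one O.norm_left_le O.norm_right_le
  have hw := P.continuous
  have hε := P.viscosity_pos
  have h_layer : b ^ 2 - c ^ 2 ≤ 2 * (b * h) := by
    nlinarith [P.sub_width_le, P.cut_lt_layer, P.cut_pos]
  have h_pointwise (y : ℝ) (hy : y ∈ Set.Icc α β) : |b ^ 2 - y ^ 2| * ‖w y‖ ^ 2 ≤
      4 * (b * h) * ‖w y‖ ^ 2 - (b ^ 2 - y ^ 2) * ‖w y‖ ^ 2 := by
    rw [← sub_mul]
    refine mul_le_mul_of_nonneg_right ?_ (sq_nonneg _)
    have : c ^ 2 ≤ y ^ 2 := by simpa using pow_le_pow_left₀ P.cut_pos.le (O.le_abs y hy) 2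
    have := mul_pos P.layer_pos P.width_pos
    rcases abs_cases (b ^ 2 - y ^ 2) with ⟨h_abs, _⟩ | ⟨h_abs, _⟩ <;> linarith
  have h_weight : ∫ y in α..β, |b ^ 2 - y ^ 2| * ‖w y‖ ^ 2 ≤
      4 * (b * h) * l2 w ^ 2 - shearForm (b ^ 2) α β w := by
    refine (integral_mono_of_continuousOn O.lt.le (by fun_prop) (by fun_prop)
      h_pointwise).trans ?_
    rw [intervalIntegral.integral_sub (Continuous.intervalIntegrable (by fun_prop) _ _)
      (Continuous.intervalIntegrable (by fun_prop) _ _), intervalIntegral.integral_const_mul,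
      shearForm]
    have := P.layer_pos
    have := P.width_pos
    gcongr
    exact integral_sq_norm_le_sq_l2 O.neg_one_le O.lt.le O.le_one hw.continuousOn
  refine ⟨p, hp, hφp, ?_⟩
  have h_neg := (neg_le_abs _).trans h_form
  rw [rayleighForm] at h_neg
  linarith [P.error_le, mul_le_mul_of_nonneg_left O.boundary_le hε.le]

lemma integral_outer_le (P : CutProblem ε K b h c m R s w φ f) (O : OuterPiece c m w φ α β) :
    ∫ y in α..β, |b ^ 2 - y ^ 2| * ‖w y‖ ^ 2 ≤ R := by
  obtain ⟨p, -, -, h⟩ := P.exists_outer_dirichlet O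
  linarith [helmholtzEnergy_nonneg (K := K) (p := p) O.lt.le]

lemma mul_sq_integral_outer_le (P : CutProblem ε K b h c m R s w φ f)
    (O : OuterPiece c m w φ α β) :
    b * (∫ y in α..β, ‖w y‖) ^ 2 ≤ 2 * (layerLog b h * R) := by
  have hw := P.continuous
  have hb := P.layer_pos
  have h_log := P.one_le_log
  have h_weight : ∫ y in α..β, layerWeight b h y * ‖w y‖ ^ 2 ≤ 2 * R := by
    simp only [layerWeight, add_mul]
    rw [intervalIntegral.integral_add (Continuous.intervalIntegrable (by fun_prop) _ _)
      (Continuous.intervalIntegrable (by fun_prop) _ _), intervalIntegral.integral_const_mul]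
    have h_sq := mul_le_mul_of_nonneg_left (integral_sq_norm_le_sq_l2 O.neg_one_le O.lt.le
      O.le_one hw.continuousOn) (mul_pos hb P.width_pos).le
    linarith [P.integral_outer_le O, P.width_error_le, P.error_nonneg]
  calc b * (∫ y in α..β, ‖w y‖) ^ 2
      ≤ b * (layerLog b h / b * ∫ y in α..β, layerWeight b h y * ‖w y‖ ^ 2) := by
        gcongr
        exact sq_integral_norm_le_layerLog_mul P.width_pos P.width_le P.layer_le_one
          O.neg_one_le O.lt.le O.le_one hw.continuousOn
    _ = layerLog b h * ∫ y in α..β, layerWeight b h y * ‖w y‖ ^ 2 := by field_simp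
    _ ≤ layerLog b h * (2 * R) := by gcongr
    _ = 2 * (layerLog b h * R) := by ring

lemma layerLog_mul_nonneg (P : CutProblem ε K b h c m R s w φ f) : 0 ≤ layerLog b h * R :=
  mul_nonneg (zero_le_one.trans P.one_le_log) P.error_nonneg

lemma le_layerLog_mul (P : CutProblem ε K b h c m R s w φ f) : R ≤ layerLog b h * R :=
  le_mul_of_one_le_left P.error_nonneg P.one_le_log

lemma norm_stream_outer_le (P : CutProblem ε K b h c m R s w φ f) (O : OuterPiece c m w φ α β)
    (hz : z = α ∨ z = β) (hzγ : z ∈ Set.Icc γ δ) (h_length : δ - γ = c) (hγ : α ≤ γ)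
    (hδ : δ ≤ β) {y : ℝ} (hy : y ∈ Set.Icc γ δ) :
    ‖φ y‖ ≤ m + √(b * (layerLog b h * R)) := by
  obtain ⟨p, hp, hφp, h_energy⟩ := P.exists_outer_dirichlet O
  have hpz : p z = 0 := by rcases hz with rfl | rfl; exacts [hp.left, hp.right]
  have h_nonneg : 0 ≤ ∫ y in α..β, |b ^ 2 - y ^ 2| * ‖w y‖ ^ 2 :=
    intervalIntegral.integral_nonneg O.lt.le fun _ _ => by positivity
  refine (norm_le_norm_sub_add _ (p y)).trans
    (add_le_add (hφp y ⟨hγ.trans hy.1, hy.2.trans hδ⟩) (Real.le_sqrt_of_sq_le ?_))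
  calc ‖p y‖ ^ 2 = ‖p y - p z‖ ^ 2 := by rw [hpz, sub_zero]
    _ ≤ c * helmholtzEnergy K α β p := h_length ▸ sq_norm_sub_le_mul_helmholtzEnergy
        (hp.contDiff.of_le one_le_two) hγ hδ hy hzγ
    _ ≤ b * (layerLog b h * R) := by
        refine mul_le_mul P.cut_lt_layer.le ?_ (helmholtzEnergy_nonneg O.lt.le) P.layer_pos.le
        linarith [P.le_layerLog_mul, P.error_nonneg]

lemma mul_integral_outer_le (P : CutProblem ε K b h c m R s w φ f) (O : OuterPiece c m w φ α β)
    (hγ : α ≤ γ) (hγδ : γ ≤ δ) (hδ : δ ≤ β) :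
    c * ∫ y in γ..δ, ‖w y‖ ≤ 2 * √(b * (layerLog b h * R)) := by
  have hb := P.layer_pos
  have hLR := P.layerLog_mul_nonneg
  have h_outer : ∫ y in γ..δ, ‖w y‖ ≤ ∫ y in α..β, ‖w y‖ :=
    integral_le_integral_of_subinterval hγ hγδ hδ P.continuous.norm.continuousOn
      fun _ _ => norm_nonneg _
  calc c * ∫ y in γ..δ, ‖w y‖ ≤ b * ∫ y in α..β, ‖w y‖ :=
        mul_le_mul P.cut_lt_layer.le h_outer
          (intervalIntegral.integral_nonneg hγδ fun _ _ => norm_nonneg _) hb.le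
    _ ≤ 2 * √(b * (layerLog b h * R)) := by
        refine le_of_sq_le_sq ?_ (by positivity)
        rw [mul_pow, mul_pow 2, Real.sq_sqrt (by positivity)]
        nlinarith [mul_le_mul_of_nonneg_left (P.mul_sq_integral_outer_le O) hb.le,
          mul_nonneg hb.le hLR]

lemma mul_norm_deriv_stream_le (P : CutProblem ε K b h c m R s w φ f)
    (O : OuterPiece c m w φ α β) (hK : K * c ≤ 1 / 4) (hz : z = α ∨ z = β)
    (hzγ : z ∈ Set.Icc γ δ) (h_length : δ - γ = c) (hγ : α ≤ γ) (hδ : δ ≤ β) :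
    c * ‖deriv φ z‖ ≤ 3 * m + 5 * √(b * (layerLog b h * R)) := by
  have h_sub := Set.Icc_subset_Icc (O.neg_one_le.trans hγ) (hδ.trans O.le_one)
  have h_slope := (P.stream.toHelmholtzOn.mono h_sub).mul_norm_deriv_le_of_norm_le
    (zero_le_one.trans P.one_le_wavenumber) (h_length ▸ hK)
    (fun _ => P.norm_stream_outer_le O hz hzγ h_length hγ hδ) hzγ
  rw [h_length] at h_slope
  linarith [P.mul_integral_outer_le O hγ (hzγ.1.trans hzγ.2) hδ]

lemma mul_integral_inner_dirichlet_le (P : CutProblem ε K b h c m R s w φ f)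
    (hK : K * c ≤ 1 / 4) (hp : DirichletHelmholtzOn K (-c) c p w)
    (h_form : rayleighForm (b ^ 2) K (-c) c w p ≤ R) :
    c * (K ^ 2 * ∫ y in -c..c, ‖p y‖) ≤ √(b * (layerLog b h * R)) := by
  have hc := P.cut_pos
  have h_neg : -c ≤ c := neg_le_self hc.le
  have hK₀ : 0 ≤ K := zero_le_one.trans P.one_le_wavenumber
  refine Real.le_sqrt_of_sq_le ?_
  calc (c * (K ^ 2 * ∫ y in -c..c, ‖p y‖)) ^ 2
      ≤ (c * K ^ 2) ^ 2 * ((c - -c) * ∫ y in -c..c, ‖p y‖ ^ 2) := by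
        rw [← mul_assoc, mul_pow]
        gcongr
        exact sq_integral_le_mul_integral_sq h_neg hp.continuous.norm.continuousOn
    _ = (K * c) ^ 2 * (c * (2 * (K ^ 2 * ∫ y in -c..c, ‖p y‖ ^ 2))) := by ring
    _ ≤ (K * c) ^ 2 * (c * R) := by
        gcongr
        exact (hp.two_mul_sq_integral_le_rayleighForm h_neg fun _ => P.sq_lt).trans h_form
    _ ≤ c * R := mul_le_of_le_one_left (mul_nonneg hc.le P.error_nonneg)
        (pow_le_one₀ (by positivity) (by linarith))
    _ ≤ b * (layerLog b h * R) :=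
        mul_le_mul P.cut_lt_layer.le P.le_layerLog_mul P.error_nonneg P.layer_pos.le

lemma mul_norm_integral_stream_le (P : CutProblem ε K b h c m R s w φ f)
    (hK : K * c ≤ 1 / 4) :
    c * (K ^ 2 * ‖∫ y in -c..c, φ y‖) ≤ m + √(b * (layerLog b h * R)) := by
  obtain ⟨p, hp, hφp, h_form⟩ := P.exists_inner_dirichlet
  have hc := P.cut_pos
  have hK₁ := P.one_le_wavenumber
  have h_neg : -c ≤ c := neg_le_self hc.le
  have hp₀ := hp.continuous
  have hφ := P.stream.continuous
  have h_split : ‖∫ y in -c..c, φ y‖ ≤ 2 * c * m + ∫ y in -c..c, ‖p y‖ :=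
    calc ‖∫ y in -c..c, φ y‖ ≤ ∫ y in -c..c, ‖φ y‖ :=
          intervalIntegral.norm_integral_le_integral_norm h_neg
      _ ≤ ∫ y in -c..c, (m + ‖p y‖) :=
          integral_mono_of_continuousOn h_neg (by fun_prop) (by fun_prop) fun y hy =>
            (norm_le_norm_sub_add _ _).trans (by gcongr; exact hφp y hy)
      _ = 2 * c * m + ∫ y in -c..c, ‖p y‖ := by
          rw [intervalIntegral.integral_add (Continuous.intervalIntegrable (by fun_prop) _ _)
            (Continuous.intervalIntegrable (by fun_prop) _ _), intervalIntegral.integral_const]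
          simp [two_mul]
  have h_wavenumber : 2 * (K * c) ^ 2 * m ≤ m := by
    refine mul_le_of_le_one_left P.bound_nonneg ?_
    nlinarith [mul_pos (zero_lt_one.trans_le hK₁) hc]
  linarith [mul_le_mul_of_nonneg_left h_split (mul_nonneg hc.le (sq_nonneg K)),
    P.mul_integral_inner_dirichlet_le hK hp h_form]

lemma mul_norm_integral_inner_le (P : CutProblem ε K b h c m R s w φ f)
    (hK : K * c ≤ 1 / 4) :
    c * ‖∫ y in -c..c, w y‖ ≤ 7 * m + 11 * √(b * (layerLog b h * R)) := by
  have hc := P.cut_pos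
  have h_neg : -c ≤ c := neg_le_self hc.le
  have hc₂ : 2 * c ≤ 1 := by nlinarith [P.one_le_wavenumber]
  have h_left := P.mul_norm_deriv_stream_le P.outerPiece_left hK (z := -c) (γ := -(2 * c))
    (δ := -c) (.inr rfl) ⟨by linarith, le_rfl⟩ (by ring) (neg_le_neg hc₂) le_rfl
  have h_right := P.mul_norm_deriv_stream_le P.outerPiece_right hK (z := c) (γ := c)
    (δ := 2 * c) (.inl rfl) ⟨le_rfl, by linarith⟩ (by ring) le_rfl hc₂
  have h_eq : ∫ y in -c..c, w y =
      (deriv φ c - deriv φ (-c)) - K ^ 2 • ∫ y in -c..c, φ y := by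
    have h_second : IntervalIntegrable (deriv (deriv φ)) volume (-c) c :=
      P.stream.continuous_deriv_deriv.intervalIntegrable _ _
    have h_zeroth : IntervalIntegrable (fun y => K ^ 2 • φ y) volume (-c) c :=
      (P.stream.continuous.const_smul (K ^ 2)).intervalIntegrable _ _
    rw [← intervalIntegral.integral_deriv_eq_sub
      (fun t _ => P.stream.contDiff_deriv.differentiable_one t) h_second,
      ← intervalIntegral.integral_smul, ← intervalIntegral.integral_sub h_second h_zeroth]
    refine intervalIntegral.integral_congr fun y hy => ?_
    rw [Set.uIcc_of_le h_neg] at hy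
    have := P.cut_lt_one
    exact (P.stream.eqn y ⟨by linarith [hy.1], by linarith [hy.2]⟩).symm
  have h_norm : ‖∫ y in -c..c, w y‖ ≤
      ‖deriv φ c‖ + ‖deriv φ (-c)‖ + K ^ 2 * ‖∫ y in -c..c, φ y‖ := by
    rw [h_eq, ← norm_smul_of_nonneg (sq_nonneg K)]
    exact (norm_sub_le _ _).trans (by gcongr; exact norm_sub_le _ _)
  linarith [mul_le_mul_of_nonneg_left h_norm hc.le, P.mul_norm_integral_stream_le hK]

lemma mul_sq_norm_integral_inner_le (P : CutProblem ε K b h c m R s w φ f)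
    (hK : K * c ≤ 1 / 4) :
    c * ‖∫ y in -c..c, w y‖ ^ 2 ≤ 323 * (layerLog b h * R) + 131 * (m ^ 2 / b) := by
  have hb := P.layer_pos
  have hc := P.cut_pos
  have hLR := P.layerLog_mul_nonneg
  have h_sq := (pow_le_pow_left₀ (by positivity) (P.mul_norm_integral_inner_le hK) 2).trans
    add_sq_le
  rw [mul_pow 11, Real.sq_sqrt (by positivity)] at h_sq
  refine le_of_mul_le_mul_left ?_ (by positivity : 0 < 3 * b)
  calc 3 * b * (c * ‖∫ y in -c..c, w y‖ ^ 2)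
      ≤ 4 * c * (c * ‖∫ y in -c..c, w y‖ ^ 2) :=
        mul_le_mul_of_nonneg_right P.three_mul_le (by positivity)
    _ = 4 * (c * ‖∫ y in -c..c, w y‖) ^ 2 := by ring
    _ ≤ 969 * (b * (layerLog b h * R)) + 393 * m ^ 2 := by
        linarith [mul_nonneg hb.le hLR, sq_nonneg m]
    _ = 3 * b * (323 * (layerLog b h * R) + 131 * (m ^ 2 / b)) := by field_simp; ring

lemma mul_integral_inv_shear_le (P : CutProblem ε K b h c m R s w φ f) :
    c * ∫ y in -c..c, (b ^ 2 - y ^ 2)⁻¹ ≤ 3 * layerLog b h := by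
  have hb := P.layer_pos
  have hc := P.cut_pos
  have h_neg : -c ≤ c := neg_le_self hc.le
  have h_pos := layerWeight_pos hb P.width_pos
  have h_cont : Continuous fun y => (layerWeight b h y)⁻¹ :=
    (continuous_layerWeight b h).inv₀ fun y => (h_pos y).ne'
  have h_pointwise (y : ℝ) (hy : y ∈ Set.Icc (-c) c) :
      (b ^ 2 - y ^ 2)⁻¹ ≤ 3 * (layerWeight b h y)⁻¹ := by
    have h_shear : 0 < b ^ 2 - y ^ 2 := sub_pos.2 (P.sq_lt hy)
    rw [← div_eq_mul_inv, inv_eq_one_div, div_le_div_iff₀ h_shear (h_pos y), layerWeight,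
      abs_of_pos h_shear]
    nlinarith [abs_le.2 hy, sq_abs y, P.cut_le, P.width_pos, abs_nonneg y]
  calc c * ∫ y in -c..c, (b ^ 2 - y ^ 2)⁻¹
      ≤ c * ∫ y in -c..c, 3 * (layerWeight b h y)⁻¹ := by
        gcongr
        exact integral_mono_of_continuousOn h_neg (continuousOn_inv_shear fun _ => P.sq_lt)
          (h_cont.const_smul (3 : ℝ)).continuousOn h_pointwise
    _ ≤ b * (3 * (layerLog b h / b)) := by
        rw [intervalIntegral.integral_const_mul]
        have h_inv : ∫ y in -c..c, (layerWeight b h y)⁻¹ ≤ layerLog b h / b :=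
          (integral_le_integral_of_subinterval (neg_le_neg P.cut_lt_one.le) h_neg
            P.cut_lt_one.le h_cont.continuousOn fun y _ => (inv_pos.2 (h_pos y)).le).trans
            (integral_inv_layerWeight_le P.width_pos P.width_le P.layer_le_one)
        have h_nonneg : 0 ≤ ∫ y in -c..c, (layerWeight b h y)⁻¹ :=
          intervalIntegral.integral_nonneg h_neg fun y _ => (inv_pos.2 (h_pos y)).le
        exact mul_le_mul P.cut_lt_layer.le (by gcongr) (by positivity) hb.le
    _ = 3 * layerLog b h := by field_simp

lemma shearForm_inner_le (P : CutProblem ε K b h c m R s w φ f) :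
    shearForm (b ^ 2) (-c) c w ≤ 2700 * (layerLog b h * R + m ^ 2 / b) := by
  obtain ⟨p, hp, -, h_form⟩ := P.exists_inner_dirichlet
  have hb := P.layer_pos
  have hc := P.cut_pos
  have h_neg : -c ≤ c := neg_le_self hc.le
  have hLR := P.le_layerLog_mul
  have hR := P.error_nonneg
  have hm : 0 ≤ m ^ 2 / b := by positivity
  rcases le_total 1 (16 * (K ^ 2 * b ^ 2)) with hKb | hKb
  · have := hp.shearForm_le_mul_rayleighForm h_neg (by positivity) (fun _ => P.sq_lt) hKb
    linarith
  have hKc : K * c ≤ 1 / 4 := by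
    have hK := zero_le_one.trans P.one_le_wavenumber
    have hKb' : K * b ≤ 1 / 4 := le_of_sq_le_sq (by linarith) (by norm_num)
    exact (mul_le_mul_of_nonneg_left P.cut_lt_layer.le hK).trans hKb'
  have h_mean := P.mul_sq_norm_integral_inner_le hKc
  calc shearForm (b ^ 2) (-c) c w
      ≤ (64 + 8 * c * ∫ y in -c..c, (b ^ 2 - y ^ 2)⁻¹) * rayleighForm (b ^ 2) K (-c) c w p +
          8 * c * ‖∫ y in -c..c, w y‖ ^ 2 :=
        hp.shearForm_le_add_sq_integral hc (P.sq_lt ⟨h_neg, le_rfl⟩)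
          (by nlinarith [P.three_mul_le])
    _ ≤ (64 + 24 * layerLog b h) * R + 8 * c * ‖∫ y in -c..c, w y‖ ^ 2 := by
        refine add_le_add (mul_le_mul ?_ h_form (hp.rayleighForm_nonneg h_neg fun _ => P.sq_lt)
          ?_) le_rfl
        · linarith [P.mul_integral_inv_shear_le]
        · linarith [P.one_le_log]
    _ ≤ _ := by linarith

lemma integral_abs_shear_le (P : CutProblem ε K b h c m R s w φ f) :
    ∫ y in -1..1, |b ^ 2 - y ^ 2| * ‖w y‖ ^ 2 ≤ 2702 * (layerLog b h * R + m ^ 2 / b) := by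
  have hw := P.continuous
  have hc := P.cut_pos
  have h_neg : -c ≤ c := neg_le_self hc.le
  have hb := P.layer_pos
  have hm : 0 ≤ m ^ 2 / b := by positivity
  have h_inner : ∫ y in -c..c, |b ^ 2 - y ^ 2| * ‖w y‖ ^ 2 = shearForm (b ^ 2) (-c) c w := by
    refine intervalIntegral.integral_congr fun y hy => ?_
    rw [Set.uIcc_of_le h_neg] at hy
    simp only [abs_of_pos (sub_pos.2 (P.sq_lt hy))]
  rw [integral_split_of_continuousOn (β := -c) (neg_le_neg P.cut_lt_one.le)
      (h_neg.trans P.cut_lt_one.le) (by fun_prop),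
    integral_split_of_continuousOn h_neg P.cut_lt_one.le (by fun_prop), h_inner]
  linarith [P.integral_outer_le P.outerPiece_left, P.integral_outer_le P.outerPiece_right,
    P.shearForm_inner_le, P.le_layerLog_mul]

end CutProblem

/-- The shear energy `∫ |b² - y²| |w|²` around the critical points `±b`, `b = σr²`, in the units of
a forcing squared. -/
def scaledShear (σ r : ℝ) (w : ℝ → ℂ) : ℝ :=
  σ ^ 2 * ∫ y in -1..1, |(σ * r ^ 2) ^ 2 - y ^ 2| * ‖w y‖ ^ 2

/-- The squared size of the forcing together with the scaled vorticity it is meant to control. -/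
def scaledSize (σ : ℝ) (w f : ℝ → ℂ) : ℝ := l2 f ^ 2 + (σ ^ 2 * l2 w) ^ 2

/-- A bound for `σ ‖φ‖²` on layers of width `σ / r` next to the critical points. -/
def scaledLayerBound (σ r : ℝ) (w f : ℝ → ℂ) : ℝ :=
  138 * (r ^ 3 * scaledSize σ w f) + scaledShear σ r w / r

lemma scaledShear_nonneg (σ r : ℝ) (w : ℝ → ℂ) : 0 ≤ scaledShear σ r w :=
  mul_nonneg (sq_nonneg σ)
    (intervalIntegral.integral_nonneg (by norm_num) fun _ _ => by positivity)

lemma scaledSize_nonneg (σ : ℝ) (w f : ℝ → ℂ) : 0 ≤ scaledSize σ w f := by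
  unfold scaledSize
  positivity

lemma scaledLayerBound_nonneg {r : ℝ} (hr : 0 ≤ r) (σ : ℝ) (w f : ℝ → ℂ) :
    0 ≤ scaledLayerBound σ r w f := by
  have := scaledShear_nonneg σ r w
  have := scaledSize_nonneg σ w f
  unfold scaledLayerBound
  positivity

lemma two_mul_mul_le_scaledSize (σ : ℝ) (w f : ℝ → ℂ) :
    2 * (l2 f * (σ ^ 2 * l2 w)) ≤ scaledSize σ w f := by
  unfold scaledSize
  linarith [two_mul_le_add_sq (l2 f) (σ ^ 2 * l2 w)]

lemma layer_width_le {σ r : ℝ} (hσ : 0 ≤ σ) (hr : 1 ≤ r) : σ / r ≤ σ * r ^ 2 :=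
  (div_le_self hσ hr).trans (le_mul_of_one_le_right hσ (one_le_pow₀ hr))

lemma abs_sub_sq_le_of_mem_layer {b h y : ℝ} (hh : h ≤ b) (hy : |y| ∈ Set.Icc (b - h) b) :
    |b ^ 2 - y ^ 2| ≤ 2 * (b * h) := by
  rw [← sq_abs y, abs_of_nonneg (by nlinarith [hy.1, hy.2, abs_nonneg y])]
  nlinarith [hy.1, hy.2, abs_nonneg y]

namespace SlipProblem

variable {K s σ r α β : ℝ} {w φ f : ℝ → ℂ}

lemma sq_cube_mul_l2_deriv_le {a : ℝ} (H : SlipProblem (σ ^ 4) K a s w φ f) :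
    (σ ^ 3 * l2 (deriv w)) ^ 2 ≤ l2 f * (σ ^ 2 * l2 w) := by
  linarith [mul_le_mul_of_nonneg_left H.mul_sq_l2_deriv_le (sq_nonneg σ)]

lemma two_mul_helmholtzEnergy_le (H : SlipProblem (σ ^ 4) K ((σ * r ^ 2) ^ 2) s w φ f) :
    σ ^ 2 * (2 * helmholtzEnergy K (-1) 1 φ) ≤
      scaledShear σ r w + l2 f * (σ ^ 2 * l2 w) := by
  have hw := H.continuous
  have h_form := (neg_le_abs _).trans H.abs_rayleighForm_le
  have h_shear : shearForm ((σ * r ^ 2) ^ 2) (-1) 1 w ≤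
      ∫ y in -1..1, |(σ * r ^ 2) ^ 2 - y ^ 2| * ‖w y‖ ^ 2 :=
    integral_mono_of_continuousOn (by norm_num) (by fun_prop) (by fun_prop) fun y _ =>
      mul_le_mul_of_nonneg_right (le_abs_self _) (sq_nonneg _)
  rw [rayleighForm] at h_form
  unfold scaledShear
  linarith [mul_le_mul_of_nonneg_left
    (show 2 * helmholtzEnergy K (-1) 1 φ ≤ _ + l2 f * l2 w by linarith) (sq_nonneg σ)]

lemma mul_sq_norm_stream_le_scaledLayerBound
    (H : SlipProblem (σ ^ 4) K ((σ * r ^ 2) ^ 2) s w φ f) (hσ : 0 < σ) (hr : 2 ≤ r)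
    (h₁ : -1 ≤ α) (h₂ : β ≤ 1) (h_width : β - α = σ / r)
    (h_layer : ∀ y ∈ Set.Icc α β, |(σ * r ^ 2) ^ 2 - y ^ 2| ≤ 2 * (σ ^ 2 * r)) {y : ℝ}
    (hy : y ∈ Set.Icc α β) : σ * ‖φ y‖ ^ 2 ≤ scaledLayerBound σ r w f := by
  have hr₀ : 0 < r := by linarith
  have h_pos : 0 < β - α := h_width ▸ div_pos hσ hr₀
  have h_average := H.cube_mul_sq_norm_stream_le h₁ (sub_pos.1 h_pos) h₂ h_layer hy
  rw [h_width] at h_average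
  have h_deriv := H.sq_cube_mul_l2_deriv_le
  have h_energy := H.two_mul_helmholtzEnergy_le
  have h_size := two_mul_mul_le_scaledSize σ w f
  have h_nonneg : 0 ≤ scaledSize σ w f := scaledSize_nonneg σ w f
  have h_cube : 8 ≤ r ^ 3 := by linarith [pow_le_pow_left₀ zero_le_two hr 3]
  have h_forcing : 54 * (r * l2 f ^ 2) ≤ 14 * (r ^ 3 * l2 f ^ 2) := by
    nlinarith [mul_nonneg (mul_nonneg hr₀.le (sq_nonneg (l2 f)))
      (by nlinarith : 0 ≤ r ^ 2 - 4)]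
  have h_quotient : l2 f * (σ ^ 2 * l2 w) / r ≤ r ^ 3 * scaledSize σ w f := by
    rw [div_le_iff₀ hr₀]
    nlinarith [mul_le_mul_of_nonneg_right (by nlinarith : 1 ≤ r ^ 3 * r) h_nonneg]
  calc σ * ‖φ y‖ ^ 2 = r ^ 3 / σ ^ 2 * ((σ / r) ^ 3 * ‖φ y‖ ^ 2) := by field_simp
    _ ≤ r ^ 3 / σ ^ 2 * _ := mul_le_mul_of_nonneg_left h_average (by positivity)
    _ = 54 * (r * l2 f ^ 2) + 56 * (r ^ 3 * (σ ^ 2 * l2 w) ^ 2) +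
          162 * (r ^ 3 * (σ ^ 3 * l2 (deriv w)) ^ 2) +
          σ ^ 2 * (2 * helmholtzEnergy K (-1) 1 φ) / r := by field_simp; ring
    _ ≤ 14 * (r ^ 3 * l2 f ^ 2) + 56 * (r ^ 3 * (σ ^ 2 * l2 w) ^ 2) +
          162 * (r ^ 3 * (l2 f * (σ ^ 2 * l2 w))) +
          (scaledShear σ r w + l2 f * (σ ^ 2 * l2 w)) / r := by gcongr
    _ ≤ scaledLayerBound σ r w f := by
        rw [scaledLayerBound, add_div]
        have := mul_le_mul_of_nonneg_left h_size (pow_nonneg hr₀.le 3)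
        unfold scaledSize at *
        nlinarith [mul_nonneg (pow_nonneg hr₀.le 3) (sq_nonneg (l2 f))]


lemma sq_mul_cut_error_le {a c v : ℝ} (H : SlipProblem (σ ^ 4) K a s w φ f) (hσ : 0 < σ)
    (hr : 1 ≤ r) (h_cut : σ / r / 2 * (‖deriv w (-c)‖ * ‖w (-c)‖ + ‖deriv w c‖ * ‖w c‖) ≤
      2 * (l2 (deriv w) * l2 w)) :
    σ ^ 2 * (l2 f * l2 w + σ ^ 4 * (‖deriv w (-c)‖ * ‖w (-c)‖ + ‖deriv w c‖ * ‖w c‖) + 2 * v +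
      4 * (σ * r ^ 2 * (σ / r)) * l2 w ^ 2) ≤
      9 * (r * scaledSize σ w f) + 2 * (σ ^ 2 * v) := by
  have hr₀ : 0 < r := by linarith
  set x := σ ^ 2 * l2 w with hx
  set x' := σ ^ 3 * l2 (deriv w) with hx'
  have h_size := two_mul_mul_le_scaledSize σ w f
  have h_size₀ := scaledSize_nonneg σ w f
  have h_deriv : x' ^ 2 ≤ l2 f * x := H.sq_cube_mul_l2_deriv_le
  have h_sq : x ^ 2 ≤ scaledSize σ w f := le_add_of_nonneg_left (sq_nonneg _)
  have h_mul : x * x' ≤ scaledSize σ w f := by linarith [two_mul_le_add_sq x x']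
  have h_boundary : σ ^ 6 * (‖deriv w (-c)‖ * ‖w (-c)‖ + ‖deriv w c‖ * ‖w c‖) ≤
      4 * (r * (x * x')) :=
    calc σ ^ 6 * (‖deriv w (-c)‖ * ‖w (-c)‖ + ‖deriv w c‖ * ‖w c‖)
        = 2 * (r * σ ^ 5) *
          (σ / r / 2 * (‖deriv w (-c)‖ * ‖w (-c)‖ + ‖deriv w c‖ * ‖w c‖)) := by field_simp
      _ ≤ 2 * (r * σ ^ 5) * (2 * (l2 (deriv w) * l2 w)) := by gcongr
      _ = 4 * (r * (x * x')) := by rw [hx, hx']; ring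
  calc _ = l2 f * x + σ ^ 6 * (‖deriv w (-c)‖ * ‖w (-c)‖ + ‖deriv w c‖ * ‖w c‖) +
        4 * (r * x ^ 2) + 2 * (σ ^ 2 * v) := by rw [hx]; field_simp; ring
    _ ≤ r * scaledSize σ w f + 4 * (r * scaledSize σ w f) + 4 * (r * scaledSize σ w f) +
        2 * (σ ^ 2 * v) := by
        have : l2 f * x ≤ r * scaledSize σ w f :=
          (by linarith : l2 f * x ≤ scaledSize σ w f).trans (le_mul_of_one_le_left h_size₀ hr)
        linarith [mul_le_mul_of_nonneg_left h_mul hr₀.le,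
          mul_le_mul_of_nonneg_left h_sq hr₀.le]
    _ = 9 * (r * scaledSize σ w f) + 2 * (σ ^ 2 * v) := by ring

lemma exists_cutProblem (H : SlipProblem (σ ^ 4) K ((σ * r ^ 2) ^ 2) s w φ f) (hσ : 0 < σ)
    (hr : 2 ≤ r) (hb₁ : σ * r ^ 2 ≤ 1) :
    ∃ c R, CutProblem (σ ^ 4) K (σ * r ^ 2) (σ / r) c √(scaledLayerBound σ r w f / σ) R s w φ f ∧
      σ ^ 2 * R ≤ 9 * (r * scaledSize σ w f) +
        2 * (σ ^ 2 * (√(scaledLayerBound σ r w f / σ) * l1 w)) := by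
  have hr₀ : 0 < r := by linarith
  have hh : 0 < σ / r := div_pos hσ hr₀
  have h_mul : σ * r ^ 2 * (σ / r) = σ ^ 2 * r := by field_simp
  have h_four : 4 * (σ / r) ≤ σ * r ^ 2 := by
    rw [mul_div_assoc', div_le_iff₀ hr₀]
    nlinarith [mul_le_mul_of_nonneg_left (pow_le_pow_left₀ zero_le_two hr 3) hσ.le]
  obtain ⟨c, hc, h_cut⟩ := H.exists_symmetric_cut (α := σ * r ^ 2 - σ / r)
    (β := σ * r ^ 2 - σ / r / 2) (by linarith) (by linarith) (by linarith)
  have h_norm (y : ℝ) (hy : σ * ‖φ y‖ ^ 2 ≤ scaledLayerBound σ r w f) :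
      ‖φ y‖ ≤ √(scaledLayerBound σ r w f / σ) :=
    Real.le_sqrt_of_sq_le ((le_div_iff₀' hσ).2 hy)
  have h_layer (y : ℝ) (hy : |y| ∈ Set.Icc (σ * r ^ 2 - σ / r) (σ * r ^ 2)) :
      |(σ * r ^ 2) ^ 2 - y ^ 2| ≤ 2 * (σ ^ 2 * r) :=
    h_mul ▸ abs_sub_sq_le_of_mem_layer (by linarith) hy
  have h_left := h_norm (-c) <| H.mul_sq_norm_stream_le_scaledLayerBound hσ hr
    (α := -(σ * r ^ 2)) (β := -(σ * r ^ 2 - σ / r)) (by linarith) (by linarith) (by ring)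
    (fun y hy => h_layer y (by
      rw [abs_of_nonpos (by linarith [hy.2])]
      exact ⟨by linarith [hy.2], by linarith [hy.1]⟩))
    ⟨by linarith [hc.2], by linarith [hc.1]⟩
  have h_right := h_norm c <| H.mul_sq_norm_stream_le_scaledLayerBound hσ hr
    (α := σ * r ^ 2 - σ / r) (β := σ * r ^ 2) (by linarith) hb₁ (by ring)
    (fun y hy => h_layer y (by rwa [abs_of_nonneg (by linarith [hy.1])]))
    ⟨hc.1, by linarith [hc.2]⟩
  refine ⟨c, _, ⟨H, hh, h_four, hb₁, hc.1, hc.2, h_left, h_right, le_rfl⟩,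
    H.sq_mul_cut_error_le hσ (by linarith) ?_⟩
  convert h_cut using 2
  ring

lemma scaledShear_le (H : SlipProblem (σ ^ 4) K ((σ * r ^ 2) ^ 2) s w φ f) (hσ : 0 < σ)
    (hr : 2 ≤ r) (hb₁ : σ * r ^ 2 ≤ 1) :
    scaledShear σ r w ≤ 2702 * (layerLog (σ * r ^ 2) (σ / r) * (9 * (r * scaledSize σ w f) +
      2 * (σ ^ 2 * (√(scaledLayerBound σ r w f / σ) * l1 w))) +
        scaledLayerBound σ r w f / r ^ 2) := by
  obtain ⟨c, R, P, hR⟩ := H.exists_cutProblem hσ hr hb₁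
  have hr₀ : 0 < r := by linarith
  have h_log := zero_le_one.trans P.one_le_log
  have h_layer := scaledLayerBound_nonneg hr₀.le σ w f
  calc scaledShear σ r w
      ≤ σ ^ 2 * (2702 * (layerLog (σ * r ^ 2) (σ / r) * R +
          √(scaledLayerBound σ r w f / σ) ^ 2 / (σ * r ^ 2))) :=
        mul_le_mul_of_nonneg_left P.integral_abs_shear_le (sq_nonneg σ)
    _ = 2702 * (layerLog (σ * r ^ 2) (σ / r) * (σ ^ 2 * R) +
          scaledLayerBound σ r w f / r ^ 2) := by
        rw [Real.sq_sqrt (by positivity)]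
        field_simp
    _ ≤ _ := by gcongr

lemma sq_mul_sq_l1_le (H : SlipProblem (σ ^ 4) K ((σ * r ^ 2) ^ 2) s w φ f) (hσ : 0 < σ)
    (hr : 1 ≤ r) (hb₁ : σ * r ^ 2 ≤ 1) :
    r ^ 2 * (σ ^ 3 * l1 w ^ 2) ≤ layerLog (σ * r ^ 2) (σ / r) *
      (scaledShear σ r w + r * scaledSize σ w f) := by
  have hw := H.continuous
  have hr₀ : 0 < r := by linarith
  have hh : 0 < σ / r := div_pos hσ hr₀
  have h_width := layer_width_le hσ.le hr
  have h_log := zero_le_one.trans (one_le_layerLog hh h_width)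
  have h_sq : (σ ^ 2 * l2 w) ^ 2 ≤ scaledSize σ w f := le_add_of_nonneg_left (sq_nonneg _)
  have h_weight : ∫ y in -1..1, layerWeight (σ * r ^ 2) (σ / r) y * ‖w y‖ ^ 2 =
      (∫ y in -1..1, |(σ * r ^ 2) ^ 2 - y ^ 2| * ‖w y‖ ^ 2) + σ ^ 2 * r * l2 w ^ 2 := by
    simp only [layerWeight, add_mul]
    rw [intervalIntegral.integral_add (Continuous.intervalIntegrable (by fun_prop) _ _)
      (Continuous.intervalIntegrable (by fun_prop) _ _), intervalIntegral.integral_const_mul,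
      sq_l2]
    field_simp
  have h_l1 : σ * r ^ 2 * l1 w ^ 2 ≤ layerLog (σ * r ^ 2) (σ / r) *
      ((∫ y in -1..1, |(σ * r ^ 2) ^ 2 - y ^ 2| * ‖w y‖ ^ 2) + σ ^ 2 * r * l2 w ^ 2) := by
    rw [← h_weight, ← le_div_iff₀' (by positivity), ← div_mul_eq_mul_div]
    exact sq_integral_norm_le_layerLog_mul hh h_width hb₁ le_rfl (by norm_num) le_rfl
      hw.continuousOn
  calc r ^ 2 * (σ ^ 3 * l1 w ^ 2) = σ ^ 2 * (σ * r ^ 2 * l1 w ^ 2) := by ring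
    _ ≤ σ ^ 2 * _ := mul_le_mul_of_nonneg_left h_l1 (sq_nonneg σ)
    _ = layerLog (σ * r ^ 2) (σ / r) *
          (scaledShear σ r w + r * (σ ^ 2 * l2 w) ^ 2) := by
        unfold scaledShear
        ring
    _ ≤ _ := by gcongr

end SlipProblem

lemma sq_le_of_sq_le_add_mul {F x x' : ℝ} (h : x ^ 2 ≤ (F ^ 2 + x ^ 2) / 8 + 8 * (x * x'))
    (h' : x' ^ 2 ≤ F * x) : x ^ 2 ≤ 10924 * F ^ 2 := by
  linarith [sq_nonneg (x / 2 - 8 * x'), sq_nonneg (x / 2 - 64 * F), sq_nonneg F]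

lemma le_mul_of_coupled_bounds {D L T ρ y v : ℝ} (hD : 1 ≤ D) (hL : 1 ≤ L) (hT : 0 ≤ T)
    (hy : 0 ≤ y) (hρ : 16 * (D ^ 2 * L ^ 3) ≤ ρ)
    (hv : v ^ 2 ≤ (138 * T + y / ρ) * (L * (y + T)))
    (h : y ≤ D * (L * (9 * T + 2 * v) + (138 * T + y / ρ))) :
    y ≤ 3000 * (D ^ 2 * L ^ 3) * T := by
  have hD₂ : D ≤ D ^ 2 := le_self_pow₀ hD two_ne_zero
  have hL₃ : L ≤ L ^ 3 := le_self_pow₀ hL three_ne_zero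
  have hDL : D * L ≤ D ^ 2 * L ^ 3 := by gcongr
  have hD_le : D ≤ D ^ 2 * L ^ 3 := (le_mul_of_one_le_right (by linarith) hL).trans hDL
  have hQ : 1 ≤ D ^ 2 * L ^ 3 := hD.trans hD_le
  have hρ₀ : 0 < ρ := by linarith
  have h_small : 16 * (D ^ 2 * L ^ 3) * (y / ρ) ≤ y := by
    rw [mul_div_assoc', div_le_iff₀ hρ₀, mul_comm y]
    gcongr
  have h_cross : 2 * D * L * v ≤ (y + T) / 4 + 4 * (D ^ 2 * L ^ 3) * (138 * T + y / ρ) := by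
    refine le_of_sq_le_sq ?_ (by positivity)
    calc (2 * D * L * v) ^ 2 = 4 * (D ^ 2 * L ^ 2) * v ^ 2 := by ring
      _ ≤ 4 * (D ^ 2 * L ^ 2) * ((138 * T + y / ρ) * (L * (y + T))) := by gcongr
      _ = 4 * ((y + T) / 4) * (4 * (D ^ 2 * L ^ 3) * (138 * T + y / ρ)) := by ring
      _ ≤ _ := four_mul_le_sq_add _ _
  have h_quotient : D * (y / ρ) ≤ y / 16 := by
    linarith [mul_le_mul_of_nonneg_right hD_le (div_nonneg hy hρ₀.le)]
  linarith [mul_le_mul_of_nonneg_right hDL hT, mul_le_mul_of_nonneg_right hD_le hT,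
    mul_le_mul_of_nonneg_right hQ hT]

namespace SlipProblem

variable {K s σ r : ℝ} {w φ f : ℝ → ℂ}

lemma scaledShear_le_mul_scaledSize (H : SlipProblem (σ ^ 4) K ((σ * r ^ 2) ^ 2) s w φ f)
    (hσ : 0 < σ) (hr : 2 ≤ r) (hb₁ : σ * r ^ 2 ≤ 1)
    (h_log : 16 * (2702 ^ 2 * layerLog (σ * r ^ 2) (σ / r) ^ 3) ≤ r ^ 3) :
    scaledShear σ r w ≤ 3000 * (2702 ^ 2 * layerLog (σ * r ^ 2) (σ / r) ^ 3) *
      (r * scaledSize σ w f) := by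
  have hr₀ : 0 < r := by linarith
  have h_width := layer_width_le hσ.le (one_le_two.trans hr)
  have h_layer : scaledLayerBound σ r w f / r ^ 2 =
      138 * (r * scaledSize σ w f) + scaledShear σ r w / r ^ 3 := by
    unfold scaledLayerBound
    field_simp
  have h_nonneg := scaledLayerBound_nonneg hr₀.le σ w f
  refine le_mul_of_coupled_bounds (by norm_num) (one_le_layerLog (div_pos hσ hr₀) h_width)
    (mul_nonneg hr₀.le (scaledSize_nonneg σ w f)) (scaledShear_nonneg σ r w) h_log ?_
    (h_layer ▸ H.scaledShear_le hσ hr hb₁)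
  calc (σ ^ 2 * (√(scaledLayerBound σ r w f / σ) * l1 w)) ^ 2
      = scaledLayerBound σ r w f / r ^ 2 * (r ^ 2 * (σ ^ 3 * l1 w ^ 2)) := by
        rw [mul_pow, mul_pow, Real.sq_sqrt (by positivity)]
        field_simp
    _ ≤ _ := by
        rw [← h_layer]
        exact mul_le_mul_of_nonneg_left (H.sq_mul_sq_l1_le hσ (by linarith) hb₁) (by positivity)

lemma resolventBound_of_layerLog_le (H : SlipProblem (σ ^ 4) K ((σ * r ^ 2) ^ 2) s w φ f)
    (hσ : 0 < σ) (hr : 2 ≤ r) (hb₁ : σ * r ^ 2 ≤ 1)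
    (h_log : 24016 * 2702 ^ 2 * layerLog (σ * r ^ 2) (σ / r) ^ 4 ≤ r) :
    ResolventBound 105 σ w f := by
  have hr₀ : 0 < r := by linarith
  have h_width := layer_width_le hσ.le (one_le_two.trans hr)
  have hL := one_le_layerLog (div_pos hσ hr₀) h_width
  set L := layerLog (σ * r ^ 2) (σ / r)
  set S := scaledSize σ w f with hS
  have hS₀ : 0 ≤ S := scaledSize_nonneg σ w f
  have hL₃ : L ^ 3 ≤ L ^ 4 := pow_le_pow_right₀ hL (by norm_num)
  have hL₄ : L ≤ L ^ 4 := le_self_pow₀ hL four_ne_zero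
  have h_shear := H.scaledShear_le_mul_scaledSize hσ hr hb₁
    (by linarith [le_self_pow₀ (by linarith : 1 ≤ r) three_ne_zero])
  have h_log_shear : L * scaledShear σ r w ≤ r ^ 2 * S / 8 := by
    nlinarith [mul_le_mul_of_nonneg_left h_shear (by linarith : 0 ≤ L),
      mul_le_mul_of_nonneg_right h_log (mul_nonneg hr₀.le hS₀)]
  have h_l1 : σ ^ 3 * l1 w ^ 2 ≤ S := by
    refine le_of_mul_le_mul_left ?_ (pow_pos hr₀ 2)
    nlinarith [H.sq_mul_sq_l1_le hσ (by linarith) hb₁, mul_le_mul_of_nonneg_right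
      (by linarith : 2 * L ≤ r) (mul_nonneg hr₀.le hS₀)]
  have h_vorticity : (σ ^ 2 * l2 w) ^ 2 ≤ S / 8 + 8 * (σ ^ 2 * l2 w * (σ ^ 3 * l2 (deriv w))) := by
    refine le_of_mul_le_mul_left ?_ (pow_pos hr₀ 2)
    have h_l2 := mul_le_mul_of_nonneg_left
      (H.mul_sq_l2_le (b := σ * r ^ 2) (by positivity) hσ.le) (sq_nonneg σ)
    have := le_mul_of_one_le_left (scaledShear_nonneg σ r w) hL
    unfold scaledShear at *
    linarith
  have hf := l2_nonneg f
  have h_sq := sq_le_of_sq_le_add_mul h_vorticity H.sq_cube_mul_l2_deriv_le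
  refine ⟨le_of_sq_le_sq (by linarith [sq_nonneg (l2 f)]) (by positivity), h_l1.trans ?_⟩
  rw [hS, scaledSize]
  linarith [sq_nonneg (l2 f)]

end SlipProblem

section AllRegimes

variable {K a s σ r : ℝ} {w φ f : ℝ → ℂ}

lemma layerLog_mul_sq_div (hσ : 0 < σ) (hr : 0 < r) :
    layerLog (σ * r ^ 2) (σ / r) = 6 * log (2 * r ^ 3) := by
  rw [layerLog]
  congr 2
  field_simp

lemma eventually_mul_log_pow_le {κ : ℝ} (hκ : 0 ≤ κ) :
    ∀ᶠ r in Filter.atTop, κ * (6 * log (2 * r ^ 3)) ^ 4 ≤ r := by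
  have h_bound := (isLittleO_pow_log_id_atTop (n := 4)).bound
    (show 0 < (24 ^ 4 * κ + 1)⁻¹ by positivity)
  filter_upwards [h_bound, Filter.eventually_ge_atTop 2] with r hr hr₂
  have hr₀ : 0 < r := by linarith
  rw [id, norm_of_nonneg (by positivity), norm_of_nonneg hr₀.le, ← div_eq_inv_mul,
    le_div_iff₀ (by positivity)] at hr
  have h_log : 6 * log (2 * r ^ 3) ≤ 24 * log r := by
    rw [log_mul two_ne_zero (by positivity), log_pow]
    push_cast
    linarith [log_le_log two_pos hr₂]
  have h_one : 1 ≤ r ^ 3 := one_le_pow₀ (one_le_two.trans hr₂)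
  have h_log₀ : 0 ≤ log (2 * r ^ 3) := log_nonneg (by linarith)
  calc κ * (6 * log (2 * r ^ 3)) ^ 4 ≤ κ * (24 * log r) ^ 4 := by gcongr
    _ ≤ log r ^ 4 * (24 ^ 4 * κ + 1) := by
      linarith [mul_pow 24 (log r) 4, pow_nonneg (log_nonneg (one_le_two.trans hr₂)) 4]
    _ ≤ r := hr

theorem exists_resolventBound : ∃ C, 0 < C ∧ ∀ {K a s σ : ℝ} {w φ f : ℝ → ℂ}, 0 < σ →
    SlipProblem (σ ^ 4) K a s w φ f → ResolventBound C σ w f := by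
  obtain ⟨R, hR⟩ := Filter.eventually_atTop.1
    (eventually_mul_log_pow_le (κ := 24016 * 2702 ^ 2) (by norm_num))
  set r₀ := max 2 R
  have hr₀ : 0 < r₀ := two_pos.trans_le (le_max_left 2 R)
  set C := 8 * (r₀ ^ 4 + 1) ^ 2 + 1280
  refine ⟨C, by positivity, fun {K a s σ w φ f} hσ H => ?_⟩
  have hC : 1280 ≤ C := le_add_of_nonneg_left (by positivity)
  rcases le_or_gt 1 σ with hσ₁ | hσ₁
  · exact (H.resolventBound_of_one_le hσ₁).mono (by norm_num) (by linarith)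
  rcases le_or_gt a (r₀ ^ 4 * σ ^ 2) with ha | ha
  · exact (H.resolventBound_of_le (by positivity) hσ ha).mono (by positivity)
      (le_add_of_nonneg_right (by norm_num))
  rcases lt_or_ge 1 a with ha₁ | ha₁
  · exact (H.resolventBound_of_one_lt hσ hσ₁ ha₁).mono (by norm_num) hC
  have ha₀ : 0 ≤ a := (by positivity : 0 ≤ r₀ ^ 4 * σ ^ 2).trans ha.le
  set r := √(√a / σ)
  have h_layer : σ * r ^ 2 = √a := by
    rw [sq_sqrt (by positivity), mul_div_cancel₀ _ hσ.ne']
  have hr : r₀ ≤ r := le_sqrt_of_sq_le <| (le_div_iff₀ hσ).2 <| le_sqrt_of_sq_le <| by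
    rw [mul_pow, ← pow_mul]
    exact ha.le
  have hr_pos := hr₀.trans_le hr
  rw [← sq_sqrt ha₀, ← h_layer] at H
  refine (H.resolventBound_of_layerLog_le hσ ((le_max_left 2 R).trans hr) ?_ ?_).mono
    (by norm_num) (by linarith)
  · rw [h_layer]
    exact sqrt_le_one.2 ha₁
  · rw [layerLog_mul_sq_div hσ hr_pos]
    exact hR r ((le_max_right 2 R).trans hr)

end AllRegimes

section Velocity

lemma DirichletHelmholtzOn.sqrt_mul_sqrt_helmholtzEnergy_le {E : Type*} [NormedAddCommGroup E]
    [InnerProductSpace ℝ E] {K α β : ℝ} {p w : ℝ → E} (hp : DirichletHelmholtzOn K α β p w)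
    (hK : 0 < K) (h : α ≤ β) : √K * √(helmholtzEnergy K α β p) ≤ ∫ y in α..β, ‖w y‖ := by
  have hp₀ := hp.continuous
  have hp₁ := hp.continuous_deriv
  set U := helmholtzEnergy K α β p
  have hU : 0 ≤ U := helmholtzEnergy_nonneg h
  have h_sup (y : ℝ) (hy : y ∈ Set.Icc α β) : K * ‖p y‖ ^ 2 ≤ U :=
    calc K * ‖p y‖ ^ 2 ≤ K * (‖p α‖ ^ 2 + 2 * ∫ t in α..β, ‖p t‖ * ‖deriv p t‖) := by
          gcongr
          exact sq_norm_le_add_integral (hp.contDiff.of_le one_le_two) hy (Set.left_mem_Icc.2 h)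
      _ = ∫ t in α..β, 2 * K * (‖p t‖ * ‖deriv p t‖) := by
          rw [hp.left, intervalIntegral.integral_const_mul, norm_zero]
          ring
      _ ≤ U := integral_mono_of_continuousOn h (by fun_prop) (by fun_prop) fun t _ => by
          linarith [sq_nonneg (‖deriv p t‖ - K * ‖p t‖)]
  have h_energy : U ≤ √(U / K) * ∫ y in α..β, ‖w y‖ := by
    have := hp.abs_integral_inner_add_energy_le (φ := 0) (m := √(U / K)) h continuousOn_const
      fun y hy => le_sqrt_of_sq_le <| (le_div_iff₀ hK).2 <| by
        simpa [mul_comm] using h_sup y hy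
    simpa using (le_abs_self _).trans this
  rcases hU.eq_or_lt with hU₀ | hU₀
  · rw [← hU₀, sqrt_zero, mul_zero]
    exact intervalIntegral.integral_nonneg h fun _ _ => norm_nonneg _
  · refine le_of_mul_le_mul_right ?_ (div_pos (sqrt_pos.2 hU₀) (sqrt_pos.2 hK))
    calc √K * √U * (√U / √K) = U := by
          rw [mul_div_assoc', div_eq_iff (sqrt_ne_zero'.2 hK), mul_assoc, mul_self_sqrt hU,
            mul_comm]
      _ ≤ _ := by rwa [mul_comm, ← sqrt_div hU]

lemma hk_eq_sqrt_helmholtzEnergy {φ : ℝ → ℂ} (hφ : ContDiff ℝ 1 φ) (k₁ k₃ : ℤ) :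
    hk k₁ k₃ φ = √(helmholtzEnergy (kabs k₁ k₃) (-1) 1 φ) := by
  have hφ₀ := hφ.continuous
  rw [hk, helmholtzEnergy, intervalIntegral.integral_add
    (Continuous.intervalIntegrable (by fun_prop) _ _)
    (Continuous.intervalIntegrable (by fun_prop) _ _), intervalIntegral.integral_const_mul]

end Velocity

section Rescaling

lemma l2_smul (c : ℝ) (g : ℝ → ℂ) : l2 (fun y => c • g y) = |c| * l2 g := by
  simp only [l2, norm_smul, mul_pow, intervalIntegral.integral_const_mul, norm_eq_abs]
  rw [sqrt_mul (sq_nonneg _), sqrt_sq (abs_nonneg c)]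

lemma one_le_kabs {k₁ : ℤ} (hk₁ : 1 ≤ |k₁|) (k₃ : ℤ) : 1 ≤ kabs k₁ k₃ := by
  have h : (1 : ℝ) ≤ (k₁ : ℝ) ^ 2 := by exact_mod_cast (one_le_sq_iff_one_le_abs _).2 hk₁
  exact one_le_sqrt.2 (h.trans (le_add_of_nonneg_right (sq_nonneg _)))

lemma OSslip.slipProblem {ν lam : ℝ} {k₁ k₃ : ℤ} {w φ F : ℝ → ℂ} (hν : 0 < ν)
    (hk₁ : 1 ≤ |k₁|) (h : OSslip ν k₁ k₃ lam w φ F) :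
    SlipProblem (ν / |(k₁ : ℝ)|) (kabs k₁ k₃) (1 - lam) (k₁ / |(k₁ : ℝ)|) w φ
      fun y => |(k₁ : ℝ)|⁻¹ • F y := by
  obtain ⟨hw, hφ, h_eqn, h_stream, hφ_left, hφ_right, hφ''_left, hφ''_right⟩ := h
  have hk : 0 < |(k₁ : ℝ)| := by exact_mod_cast hk₁
  exact
    { viscosity_pos := div_pos hν hk
      one_le_wavenumber := one_le_kabs hk₁ k₃
      sq_sign := by rw [div_pow, sq_abs, div_self (pow_ne_zero 2 (abs_pos.1 hk))]
      contDiff := hw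
      left := by simp [← h_stream (-1) (by simp), hφ_left, hφ''_left]
      right := by simp [← h_stream 1 (by simp), hφ_right, hφ''_right]
      stream :=
        { contDiff := hφ
          eqn := fun y hy => by simpa using h_stream y hy
          left := hφ_left
          right := hφ_right }
      eqn := fun y hy => by
        rw [← h_eqn y hy]
        simp only [Complex.real_smul]
        push_cast
        ring }

lemma rpow_mul_rpow_eq {ν k σ p q : ℝ} (hk : 0 < k) (hσ : 0 ≤ σ) (h : ν = k * σ ^ 4)
    (hpq : p + q = 1) : ν ^ p * k ^ q = k * σ ^ (4 * p) := by
  rw [h, mul_rpow hk.le (by positivity), mul_right_comm, ← rpow_add hk, hpq, rpow_one,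
    rpow_mul hσ]
  norm_cast

lemma ResolventBound.rpow_mul_l1_le {C σ : ℝ} {w f : ℝ → ℂ} (h : ResolventBound C σ w f)
    (hσ : 0 ≤ σ) (hC : 0 ≤ C) : σ ^ ((3 : ℝ) / 2) * l1 w ≤ C * l2 f := by
  refine le_of_sq_le_sq ?_ (mul_nonneg hC (l2_nonneg f))
  rw [mul_pow, ← rpow_natCast, ← rpow_mul hσ]
  norm_num only [Nat.cast_ofNat]
  exact_mod_cast h.2

lemma ResolventBound.cube_mul_l2_deriv_le {C K a s σ : ℝ} {w φ f : ℝ → ℂ}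
    (h : ResolventBound C σ w f) (H : SlipProblem (σ ^ 4) K a s w φ f) (hC : 0 ≤ C) :
    σ ^ 3 * l2 (deriv w) ≤ (C + 1) * l2 f := by
  have hf := l2_nonneg f
  refine le_of_sq_le_sq ?_ (by positivity)
  calc (σ ^ 3 * l2 (deriv w)) ^ 2 ≤ l2 f * (σ ^ 2 * l2 w) := H.sq_cube_mul_l2_deriv_le
    _ ≤ l2 f * (C * l2 f) := mul_le_mul_of_nonneg_left h.1 hf
    _ ≤ ((C + 1) * l2 f) ^ 2 := by
      have : 0 ≤ (C ^ 2 + C + 1) * l2 f ^ 2 := by positivity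
      linarith

lemma SlipProblem.weighted_sum_le {C K a s σ : ℝ} {w φ f : ℝ → ℂ}
    (H : SlipProblem (σ ^ 4) K a s w φ f) (h : ResolventBound C σ w f) (hσ : 0 ≤ σ)
    (hC : 0 ≤ C) :
    σ ^ ((3 : ℝ) / 2) * (l1 w + √K * √(helmholtzEnergy K (-1) 1 φ)) +
      σ ^ (3 : ℝ) * l2 (deriv w) + σ ^ (2 : ℝ) * l2 w ≤ (4 * C + 1) * l2 f := by
  have h_vel : σ ^ ((3 : ℝ) / 2) * (√K * √(helmholtzEnergy K (-1) 1 φ)) ≤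
      σ ^ ((3 : ℝ) / 2) * l1 w :=
    mul_le_mul_of_nonneg_left (H.stream.sqrt_mul_sqrt_helmholtzEnergy_le
      (one_pos.trans_le H.one_le_wavenumber) (by norm_num)) (by positivity)
  rw [rpow_ofNat, rpow_ofNat]
  linarith [h.1, h.rpow_mul_l1_le hσ hC, h.cube_mul_l2_deriv_le H hC]

end Rescaling

theorem OS_slip_resolvent_L2_general :
    ∃ C : ℝ, 0 < C ∧
      ∀ (ν lam : ℝ) (k₁ k₃ : ℤ) (w φ F : ℝ → ℂ),
        0 < ν → 1 ≤ |k₁| → OSslip ν k₁ k₃ (lam : ℂ) w φ F →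
        ν ^ ((3 : ℝ) / 8) * |(k₁ : ℝ)| ^ ((5 : ℝ) / 8) *
            (l1 w + √(kabs k₁ k₃) * hk k₁ k₃ φ)
          + ν ^ ((3 : ℝ) / 4) * |(k₁ : ℝ)| ^ ((1 : ℝ) / 4) * l2 (deriv w)
          + ν ^ ((1 : ℝ) / 2) * |(k₁ : ℝ)| ^ ((1 : ℝ) / 2) * l2 w
          ≤ C * l2 F := by
  obtain ⟨C, hC, h_bound⟩ := exists_resolventBound
  refine ⟨4 * C + 1, by positivity, fun ν lam k₁ k₃ w φ F hν hk₁ h => ?_⟩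
  have H := h.slipProblem hν hk₁
  have hκ : 0 < |(k₁ : ℝ)| := by exact_mod_cast hk₁
  set κ := |(k₁ : ℝ)|
  obtain ⟨σ, hσ, hσν⟩ : ∃ σ : ℝ, 0 < σ ∧ σ ^ 4 = ν / κ :=
    ⟨(ν / κ) ^ ((4 : ℕ) : ℝ)⁻¹, by positivity, rpow_inv_natCast_pow (by positivity) four_ne_zero⟩
  have hν_eq : ν = κ * σ ^ 4 := by rw [hσν, mul_div_cancel₀ _ hκ.ne']
  rw [← hσν] at H
  have h_sum := mul_le_mul_of_nonneg_left (H.weighted_sum_le (h_bound hσ H) hσ.le hC.le) hκ.le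
  rw [l2_smul, abs_inv, abs_of_pos hκ, mul_left_comm, mul_inv_cancel_left₀ hκ.ne',
    ← hk_eq_sqrt_helmholtzEnergy (h.2.1.of_le one_le_two)] at h_sum
  rw [rpow_mul_rpow_eq hκ hσ.le hν_eq (by norm_num), rpow_mul_rpow_eq hκ hσ.le hν_eq (by norm_num),
    rpow_mul_rpow_eq hκ hσ.le hν_eq (by norm_num)]
  ring_nf at h_sum ⊢
  exact h_sum

/-- **Resolvent estimate with Navier-slip boundary condition, `F ∈ L²`**
(Proposition 2.1): for all `0 < ν ≤ ν₀`, `λ ∈ ℝ`, `|k₁| ≥ 1`, `F ∈ L²` and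
every solution `w` of the Orr–Sommerfeld problem,
`ν^{3/8}|k₁|^{5/8}(‖w‖_{L¹} + |k|^{1/2}‖u‖_{L²}) + ν^{3/4}|k₁|^{1/4}‖w'‖_{L²}
  + ν^{1/2}|k₁|^{1/2}‖w‖_{L²} ≤ C‖F‖_{L²}`. -/
theorem OS_slip_resolvent_L2 :
    ∃ ν₀ C : ℝ, 0 < ν₀ ∧ ν₀ < 1 ∧ 0 < C ∧
      ∀ (ν lam : ℝ) (k₁ k₃ : ℤ) (w φ F : ℝ → ℂ),
        0 < ν → ν ≤ ν₀ → 1 ≤ |k₁| →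
        IntervalIntegrable (fun y => ‖F y‖ ^ 2) MeasureTheory.volume (-1) 1 →
        OSslip ν k₁ k₃ (lam : ℂ) w φ F →
        ν ^ ((3:ℝ)/8) * |(k₁ : ℝ)| ^ ((5:ℝ)/8) *
            (l1 w + Real.sqrt (kabs k₁ k₃) * hk k₁ k₃ φ)
          + ν ^ ((3:ℝ)/4) * |(k₁ : ℝ)| ^ ((1:ℝ)/4) * l2 (deriv w)
          + ν ^ ((1:ℝ)/2) * |(k₁ : ℝ)| ^ ((1:ℝ)/2) * l2 w
          ≤ C * l2 F := by
  obtain ⟨C, hC, h⟩ := OS_slip_resolvent_L2_general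
  exact ⟨1 / 2, C, by norm_num, by norm_num, hC, fun ν lam k₁ k₃ w φ F hν _ hk₁ _ =>
    h ν lam k₁ k₃ w φ F hν hk₁⟩

end
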